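/- Let G be a group and π a set of primes. If A is a ℤG-module belonging to the class 𝔠(G,π), then for every n ≥ 0 the integral homology group H_n(A) of the underlying abelian group of A, endowed with the ℤG-module structure induced by functoriality of group homology from the G-action on A, belongs to 𝔠(G,π). -/

import Mathlib

/-!
Statement 16: Lemma 3.6 of the paper.  The integral homology `H_n(A)` of the
underlying abelian group of a `ℤG`-module `A` is defined functorially as the
homology of the simplicial classifying space: the alternating face map complex
of the levelwise-free `ℤ`-module on the nerve of the one-object groupoid, so
that the `G`-action on `A` induces a `ℤG`-module structure on `H_n(A)`.
-/

open CategoryTheory AlgebraicTopology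

noncomputable section




/-- The rational circle `ℚ/ℤ`. -/
abbrev RatCircle : Type := ℚ ⧸ AddSubgroup.zmultiples (1 : ℚ)

/-- The quasicyclic (Prüfer) `p`-group, realized as the `p`-primary part of `ℚ/ℤ`. -/
def pruferSubgroup (p : ℕ) : AddSubgroup RatCircle where
  carrier := {x | ∃ n : ℕ, (p ^ n : ℕ) • x = 0}
  zero_mem' := ⟨0, smul_zero _⟩
  add_mem' := by
    rintro a b ⟨m, hm⟩ ⟨n, hn⟩
    refine ⟨m + n, ?_⟩
    have ha : (p ^ m * p ^ n) • a = 0 := by rw [mul_comm, mul_smul, hm, smul_zero]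
    have hb : (p ^ m * p ^ n) • b = 0 := by rw [mul_smul, hn, smul_zero]
    rw [smul_add, pow_add, ha, hb, add_zero]
  neg_mem' := by
    rintro a ⟨m, hm⟩
    exact ⟨m, by rw [smul_neg, hm, neg_zero]⟩

/-- A group has a quasicyclic `p`-section if some quotient of a subgroup is
isomorphic to the Prüfer `p`-group. -/
def HasQuasicyclicSection (G : Type*) [Group G] (p : ℕ) : Prop :=
  ∃ (H : Subgroup G) (K : Subgroup H) (_ : K.Normal),
    Nonempty ((H ⧸ K) ≃* Multiplicative (pruferSubgroup p))

/-- The spectrum of a group: the set of primes `p` such that the group has a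
section isomorphic to the quasicyclic `p`-group. -/
def groupSpectrum (G : Type*) [Group G] : Set ℕ :=
  {p | p.Prime ∧ HasQuasicyclicSection G p}

/-- The spectrum of an (additive) abelian group, via `Multiplicative`. -/
abbrev addSpectrum (A : Type*) [AddGroup A] : Set ℕ :=
  groupSpectrum (Multiplicative A)

/-- An abelian group has finite rank if its torsion-free rank and all of its
`p`-ranks are finite. -/
def FiniteRankAbelian (A : Type*) [AddCommGroup A] : Prop :=
  (∃ n : ℕ, ∀ k : ℕ, (∃ f : (Fin k →₀ ℤ) →+ A, Function.Injective f) → k ≤ n) ∧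
  ∀ p : ℕ, p.Prime → {a : A | (p : ℕ) • a = 0}.Finite

/-- A group has finite rank (in the sense appropriate for abelian groups:
finite torsion-free rank and finite `p`-ranks). -/
def FiniteRankGroup (G : Type*) [Group G] : Prop :=
  (∃ n : ℕ, ∀ k : ℕ,
    (∃ f : Multiplicative (Fin k →₀ ℤ) →* G, Function.Injective f) → k ≤ n) ∧
  ∀ p : ℕ, p.Prime → {g : G | g ^ p = 1}.Finite

/-- A solvable group of finite rank: a solvable group all of whose abelian
sections have finite rank. -/
def SolvableOfFiniteRank (G : Type*) [Group G] : Prop :=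
  IsSolvable G ∧
    ∀ (H : Subgroup G) (K : Subgroup H) (_ : K.Normal),
      (∀ x y : H ⧸ K, x * y = y * x) → FiniteRankGroup (H ⧸ K)

/-- A group is virtually abelian. -/
def VirtuallyAbelian (G : Type*) [Group G] : Prop :=
  ∃ H : Subgroup G, H.index ≠ 0 ∧ ∀ x y : H, x * y = y * x

/-- A `ℤG`-module (given as an object of `Rep ℤ G`) whose underlying abelian group
is torsion-free, of finite rank, and `π`-spectral. -/
def NiceRep {G : Type} [Group G] (π : Set ℕ) (M : Rep.{0} ℤ G) : Prop :=
  (∀ m : M, m ≠ 0 → ¬IsOfFinAddOrder m) ∧ FiniteRankAbelian M ∧ addSpectrum M ⊆ π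

/-- The class `𝒰` of solvable groups of finite rank. -/
def MemClassU (G : Type) [Group G] : Prop :=
  SolvableOfFiniteRank G ∧
  ∃ (N : Subgroup G) (_ : N.Normal),
    Group.IsNilpotent N ∧
    Group.FG (G ⧸ N) ∧ VirtuallyAbelian (G ⧸ N) ∧
    ∃ (r : ℕ) (T : Fin (r + 1) → Subgroup G),
      Monotone T ∧ T 0 = ⊥ ∧
      ((T (Fin.last r) : Set G) = {g : G | g ∈ N ∧ IsOfFinOrder g}) ∧
      (∀ (i : Fin (r + 1)) (g t : G), t ∈ T i → g * t * g⁻¹ ∈ T i) ∧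
      (∀ (i : Fin r) (n t : G), n ∈ N → t ∈ T i.succ →
        n * t * n⁻¹ * t⁻¹ ∈ T i.castSucc) ∧
      (∀ i : Fin r, (T i.castSucc).relIndex (T i.succ) = 0 →
        ∃ M : Rep ℤ (G ⧸ N), NiceRep (groupSpectrum G) M ∧
          ∃ φ : M → G,
            (∀ m : M, φ m ∈ T i.succ) ∧
            (∀ m m' : M, (φ (m + m'))⁻¹ * (φ m * φ m') ∈ T i.castSucc) ∧
            (∀ t : G, t ∈ T i.succ → ∃ m : M, (φ m)⁻¹ * t ∈ T i.castSucc) ∧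
            (∀ (g : G) (m : M),
              (φ (M.ρ (QuotientGroup.mk g) m))⁻¹ * (g * φ m * g⁻¹) ∈ T i.castSucc))

/-- The class `𝔠(G, π)`: the smallest class of `ℤG`-modules containing every
finite `ℤG`-module and every `ℤG`-module whose underlying abelian group is
torsion-free of finite rank and `π`-spectral, and closed under forming
`ℤG`-module quotients and extensions. -/
inductive MemC (G : Type) [Group G] (π : Set ℕ) : Rep.{0} ℤ G → Prop
  | of_finite (A : Rep ℤ G) (h : Finite (A : Type)) : MemC G π A
  | of_nice (A : Rep ℤ G) (h : NiceRep π A) : MemC G π A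
  | quot (A B : Rep ℤ G) (f : A ⟶ B) (hf : Function.Surjective f.hom)
      (hA : MemC G π A) : MemC G π B
  | ext (A B C : Rep ℤ G) (f : A ⟶ B) (g : B ⟶ C)
      (hinj : Function.Injective f.hom) (hsurj : Function.Surjective g.hom)
      (hexact : ∀ b : (B : Type), g.hom b = 0 ↔ ∃ a : (A : Type), f.hom a = b)
      (hA : MemC G π A) (hC : MemC G π C) : MemC G π B


def groupHomologyFunctor (n : ℕ) : MonCat ⥤ ModuleCat ℤ :=
  MonCat.toCat ⋙ nerveFunctor ⋙
    (SimplicialObject.whiskering _ _).obj (ModuleCat.free ℤ) ⋙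
    alternatingFaceMapComplex (ModuleCat ℤ) ⋙
    HomologicalComplex.homologyFunctor (ModuleCat ℤ) (ComplexShape.down ℕ) n

/-- A `ModuleCat ℤ`-endomorphism as a `ℤ`-linear endomorphism of the carrier. -/
def endOfHom {M : ModuleCat ℤ} (f : M ⟶ M) : Module.End ℤ (M : Type) :=
  { AddMonoidHom.mk' (fun x => f x) (fun a b => by exact map_add f.hom a b) with
    map_smul' := fun c x => f.hom.map_smul c x }

variable {G : Type} [Group G]

/-- The action of `g` on the underlying abelian group of a representation, as an
endomorphism of the corresponding multiplicative group. -/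
def multHom (A : Rep ℤ G) (g : G) :
    Multiplicative (A : Type) →* Multiplicative (A : Type) :=
  AddMonoidHom.toMultiplicative
    (AddMonoidHom.mk' (fun a => A.ρ g a) (fun a b => map_add (A.ρ g) a b))

/-- The `ℤG`-module structure on `H_n` of the underlying abelian group of a
representation, induced by functoriality of group homology. -/
def homologyDiagRep (A : Rep ℤ G) (n : ℕ) :
    Representation ℤ G
      ((groupHomologyFunctor n).obj (MonCat.of (Multiplicative (A : Type)))) where
  toFun g := endOfHom ((groupHomologyFunctor n).map (MonCat.ofHom (multHom A g)))
  map_one' := by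
    have h1 : MonCat.ofHom (multHom A 1) = 𝟙 (MonCat.of (Multiplicative (A : Type))) := by
      apply MonCat.hom_ext
      apply MonoidHom.ext
      intro a
      show Multiplicative.ofAdd (A.ρ 1 (Multiplicative.toAdd a)) = a
      simp
    rw [h1, CategoryTheory.Functor.map_id]
    apply LinearMap.ext
    intro x
    rfl
  map_mul' g h := by
    have h2 : MonCat.ofHom (multHom A (g * h)) =
        MonCat.ofHom (multHom A h) ≫ MonCat.ofHom (multHom A g) := by
      apply MonCat.hom_ext
      apply MonoidHom.ext
      intro a
      show Multiplicative.ofAdd (A.ρ (g * h) (Multiplicative.toAdd a)) = _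
      simp [map_mul]
      rfl
    rw [h2, CategoryTheory.Functor.map_comp]
    apply LinearMap.ext
    intro x
    rfl

/-!
`𝔠 = 𝔠(G, π)` is a Serre class, so one can compute modulo `𝔠`. Call `A` homologically small if, for
every `B`, the map `H_n(B) → H_n(A ⊕ B)` is onto modulo `𝔠` whenever the homology of `B` lies in
`𝔠` in degrees below `n`; taking for `B` the zero module gives `H_n(A) ∈ 𝔠`.

Smallness passes to extensions and quotients: the fibre powers of a surjection `B → C` with small
kernel form a Čech nerve, whose resolution of the chains of `C` shows that `H_n(B) → H_n(C)` is an
isomorphism modulo `𝔠` in the relevant degrees.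

A torsion-free `A` of finite rank is small: for the projection `a : E = A ⊕ B → A`, the cap product
with `a` maps `H_{n+1}(E)` to `H_n(E; A) = H_n(E) ⊗ A`, which lies in `𝔠`, and every class killed by
it comes from `B`. The last fact reduces to `A = ℤ`, where the class of a cycle `x` and that of its
projection to `B` differ by the Pontryagin product of the generator with the projection of `x ∩ a`.
Finite modules need no separate argument: a finite `A` is a quotient of the permutation module
`ℤ[A]`.
-/

section LocallyFG

variable {R M N : Type*} [CommRing R] [AddCommGroup M] [Module R M] [AddCommGroup N] [Module R N]
  {p : ℕ}

/-- An `R`-module is locally finitely generated at `p` if it becomes finitely generated after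
inverting the integers prime to `p`. For `p = 0` and `R = ℤ` this means that the torsion-free
rank is finite. -/
def LocallyFG (R : Type*) (p : ℕ) (M : Type*) [CommRing R] [AddCommGroup M] [Module R M] : Prop :=
  ∃ F : Submodule R M, F.FG ∧ ∀ m : M, ∃ k : ℕ, ¬p ∣ k ∧ k • m ∈ F

namespace LocallyFG

lemma of_finite [Module.Finite R M] (hp : p ≠ 1) : LocallyFG R p M :=
  ⟨⊤, Module.Finite.fg_top, fun _ => ⟨1, by simpa using hp, trivial⟩⟩

lemma of_injective [IsNoetherianRing R] (f : N →ₗ[R] M) (hf : Function.Injective f)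
    (h : LocallyFG R p M) : LocallyFG R p N := by
  obtain ⟨F, hF, h⟩ := h
  refine ⟨F.comap f,
    Submodule.fg_of_fg_map_injective f hf (hF.of_le (Submodule.map_comap_le f F)), fun n => ?_⟩
  obtain ⟨k, hk, hkn⟩ := h (f n)
  exact ⟨k, hk, by rwa [Submodule.mem_comap, map_nsmul]⟩

lemma of_surjective (f : M →ₗ[R] N) (hf : Function.Surjective f) (h : LocallyFG R p M) :
    LocallyFG R p N := by
  obtain ⟨F, hF, h⟩ := h
  refine ⟨F.map f, hF.map f, hf.forall.2 fun m => ?_⟩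
  obtain ⟨k, hk, hkm⟩ := h m
  exact ⟨k, hk, k • m, hkm, map_nsmul f k m⟩

lemma tensorProduct (hp : ∀ a b, p ∣ a * b → p ∣ a ∨ p ∣ b) (hp1 : p ≠ 1)
    (hM : LocallyFG R p M) (hN : LocallyFG R p N) : LocallyFG R p (TensorProduct R M N) := by
  obtain ⟨F, hF, hM⟩ := hM
  obtain ⟨F', hF', hN⟩ := hN
  have hmul {a b : ℕ} (ha : ¬p ∣ a) (hb : ¬p ∣ b) : ¬p ∣ a * b := fun h =>
    (hp a b h).elim ha hb
  refine ⟨Submodule.map₂ (TensorProduct.mk R M N) F F', hF.map₂ _ hF', fun t => ?_⟩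
  induction t using TensorProduct.induction_on with
  | zero => exact ⟨1, by simpa using hp1, by simp⟩
  | tmul m n =>
    obtain ⟨k, hk, hkm⟩ := hM m
    obtain ⟨l, hl, hln⟩ := hN n
    refine ⟨k * l, hmul hk hl, ?_⟩
    have hkl : (k * l) • m ⊗ₜ[R] n = (k • m) ⊗ₜ[R] (l • n) := by
      rw [TensorProduct.tmul_smul, ← TensorProduct.smul_tmul', mul_comm, mul_smul]
    exact hkl ▸ Submodule.apply_mem_map₂ (TensorProduct.mk R M N) hkm hln
  | add s t hs ht =>
    obtain ⟨k, hk, hks⟩ := hs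
    obtain ⟨l, hl, hlt⟩ := ht
    refine ⟨k * l, hmul hk hl, ?_⟩
    rw [smul_add]
    refine add_mem ?_ ?_
    · rw [mul_comm, mul_smul]
      exact nsmul_mem hks l
    · rw [mul_smul]
      exact nsmul_mem hlt k

end LocallyFG

end LocallyFG

section Rank

variable {M : Type*} [AddCommGroup M]

lemma locallyFG_zero_iff_rank_lt_aleph0 :
    LocallyFG ℤ 0 M ↔ Module.rank ℤ M < Cardinal.aleph0 := by
  constructor
  · rintro ⟨F, hF, h⟩
    have : Module.Finite ℤ F := Module.Finite.iff_fg.2 hF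
    have hrank : Module.rank ℤ (M ⧸ F) = 0 := by
      refine rank_eq_zero_iff.2 (F.mkQ_surjective.forall.2 fun m => ?_)
      obtain ⟨k, hk, hkm⟩ := h m
      refine ⟨k, by simpa using hk, ?_⟩
      rwa [← map_smul, Submodule.mkQ_apply, Submodule.Quotient.mk_eq_zero, natCast_zsmul]
    rw [← rank_quotient_add_rank_of_isDomain F, hrank, zero_add]
    exact Module.rank_lt_aleph0 ℤ F
  · intro hfin
    obtain ⟨s, hs, hli⟩ := exists_set_linearIndependent_of_isDomain ℤ M
    have hsfin : s.Finite := Cardinal.lt_aleph0_iff_set_finite.1 (hs ▸ hfin)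
    refine ⟨Submodule.span ℤ s, Submodule.fg_span hsfin, fun m => ?_⟩
    have hrank : Module.rank ℤ (M ⧸ Submodule.span ℤ s) = 0 := by
      have hadd := rank_quotient_add_rank_of_isDomain (Submodule.span ℤ s)
      rw [rank_span_set hli, hs] at hadd
      exact (Cardinal.add_eq_right_iff.1 hadd).resolve_left
        fun h => (le_of_max_le_left h).not_gt hfin
    obtain ⟨a, ha, ham⟩ := rank_eq_zero_iff.1 hrank (Submodule.Quotient.mk m)
    refine ⟨a.natAbs, by simpa using ha, ?_⟩
    rw [← Submodule.Quotient.mk_smul, Submodule.Quotient.mk_eq_zero] at ham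
    rw [← natCast_zsmul]
    rcases Int.natAbs_eq a with h | h <;> rw [h] at ham
    · exact ham
    · simpa using ham

lemma rank_lt_aleph0_iff_exists_bound :
    Module.rank ℤ M < Cardinal.aleph0 ↔
      ∃ n : ℕ, ∀ k : ℕ, (∃ f : (Fin k →₀ ℤ) →+ M, Function.Injective f) → k ≤ n := by
  constructor
  · intro h
    obtain ⟨n, hn⟩ := Cardinal.lt_aleph0.1 h
    refine ⟨n, fun k ⟨f, hf⟩ => ?_⟩
    have hle := LinearMap.lift_rank_le_of_injective f.toIntLinearMap hf
    rw [hn] at hle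
    simpa using hle
  · rintro ⟨n, hn⟩
    obtain ⟨s, hs, hli⟩ := exists_set_linearIndependent_of_isDomain ℤ M
    rw [← hs]
    by_contra! hinf
    have : Infinite s := Cardinal.aleph0_le_mk_iff.1 hinf
    let v : Fin (n + 1) → M := fun i => (Infinite.natEmbedding s i : M)
    have hv : LinearIndependent ℤ v :=
      LinearIndependent.comp hli _ ((Infinite.natEmbedding s).injective.comp Fin.val_injective)
    have := hn (n + 1) ⟨(Finsupp.linearCombination ℤ v).toAddMonoidHom, hv⟩
    lia

end Rank

section Prufer

lemma hasQuasicyclicSection_multiplicative_iff {M : Type*} [AddCommGroup M] {p : ℕ} :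
    HasQuasicyclicSection (Multiplicative M) p ↔
      ∃ (H : AddSubgroup M) (f : H →+ pruferSubgroup p), Function.Surjective f := by
  constructor
  · rintro ⟨H, K, _, ⟨e⟩⟩
    let q : H →* Multiplicative (pruferSubgroup p) := e.toMonoidHom.comp (QuotientGroup.mk' K)
    have hq : Function.Surjective q := e.surjective.comp (QuotientGroup.mk'_surjective K)
    exact ⟨Subgroup.toAddSubgroup' H, MonoidHom.toAdditiveLeft q, hq⟩
  · rintro ⟨H, f, hf⟩
    let q : AddSubgroup.toSubgroup H →* Multiplicative (pruferSubgroup p) :=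
      AddMonoidHom.toMultiplicative f
    exact ⟨AddSubgroup.toSubgroup H, q.ker, inferInstance,
      ⟨QuotientGroup.quotientKerEquivOfSurjective q hf⟩⟩

lemma infinite_pruferSubgroup {p : ℕ} (hp : p.Prime) : Infinite (pruferSubgroup p) := by
  have : Fact ((0 : ℚ) < 1) := ⟨one_pos⟩
  have horder (n : ℕ) : addOrderOf (((1 : ℚ) / (p ^ n : ℕ) : ℚ) : AddCircle (1 : ℚ)) = p ^ n :=
    AddCircle.addOrderOf_period_div (pow_pos hp.pos n)
  refine Set.infinite_coe_iff.2 (Set.infinite_of_injective_forall_mem (β := RatCircle)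
    (f := fun n : ℕ => (((1 : ℚ) / (p ^ n : ℕ) : ℚ) : AddCircle (1 : ℚ))) (fun m n hmn => ?_)
    fun n => ⟨n, addOrderOf_dvd_iff_nsmul_eq_zero.1 (horder n).dvd⟩)
  apply Nat.pow_right_injective hp.two_le
  change p ^ m = p ^ n
  rw [← horder m, ← horder n]
  exact congrArg addOrderOf hmn

lemma LocallyFG.finite_of_primary {M : Type*} [AddCommGroup M] {p : ℕ} (hp : p.Prime)
    (hM : ∀ m : M, ∃ n : ℕ, p ^ n • m = 0) (h : LocallyFG ℤ p M) : Finite M := by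
  obtain ⟨F, hF, h⟩ := h
  have htop : F = ⊤ := by
    refine eq_top_iff.2 fun m _ => ?_
    obtain ⟨k, hk, hkm⟩ := h m
    obtain ⟨n, hn⟩ := hM m
    obtain ⟨a, b, hab⟩ := Nat.isCoprime_iff_coprime.2
      (Nat.Coprime.pow_left n ((Nat.Prime.coprime_iff_not_dvd hp).2 hk))
    have hm : m = b • k • m := calc
      m = (a * (p ^ n : ℕ) + b * k : ℤ) • m := by rw [hab, one_smul]
      _ = b • k • m := by
        rw [add_smul, mul_smul, mul_smul, natCast_zsmul, natCast_zsmul, hn, smul_zero, zero_add]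
    rw [hm]
    exact F.smul_mem b hkm
  have : AddGroup.FG M := Module.Finite.iff_addGroup_fg.1 ⟨htop ▸ hF⟩
  refine AddCommGroup.finite_of_fg_isAddTorsion M fun m => ?_
  obtain ⟨n, hn⟩ := hM m
  exact isOfFinAddOrder_iff_nsmul_eq_zero.2 ⟨p ^ n, pow_pos hp.pos n, hn⟩

lemma LocallyFG.not_hasQuasicyclicSection {M : Type*} [AddCommGroup M] {p : ℕ} (hp : p.Prime)
    (h : LocallyFG ℤ p M) : ¬HasQuasicyclicSection (Multiplicative M) p := by
  rw [hasQuasicyclicSection_multiplicative_iff]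
  rintro ⟨H, f, hf⟩
  have hprufer : LocallyFG ℤ p (pruferSubgroup p) :=
    (h.of_injective H.subtype.toIntLinearMap H.subtype_injective).of_surjective
      f.toIntLinearMap hf
  have := infinite_pruferSubgroup hp
  exact not_finite_iff_infinite.2 this
    (hprufer.finite_of_primary hp fun ⟨x, n, hn⟩ => ⟨n, Subtype.ext hn⟩)

lemma pruferSubgroup_le_of_infinite {p : ℕ} (hp : p.Prime) {S : AddSubgroup RatCircle}
    (hS : S ≤ pruferSubgroup p) (hinf : (S : Set RatCircle).Infinite) : pruferSubgroup p ≤ S := by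
  rintro y ⟨n, hy⟩
  obtain ⟨w, hwS, hw⟩ : ∃ w ∈ S, p ^ n • w ≠ 0 := by
    by_contra! h
    exact hinf ((AddCircle.finite_torsion (1 : ℚ) (pow_pos hp.pos n)).subset h)
  obtain ⟨N, hN⟩ := hS hwS
  obtain ⟨m, -, hm⟩ := (Nat.dvd_prime_pow hp).1 (addOrderOf_dvd_of_nsmul_eq_zero hN)
  have hnm : n ≤ m := by
    by_contra! hmn
    exact hw (addOrderOf_dvd_iff_nsmul_eq_zero.1 (hm ▸ pow_dvd_pow p hmn.le))
  -- The cyclic group of order `p ^ m` generated by `w` is already all of the `p ^ m`-torsion.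
  have htorsion : (AddSubgroup.zmultiples w : Set RatCircle) = {u | p ^ m • u = 0} := by
    have hfin : Finite (AddSubgroup.zmultiples w) :=
      Nat.finite_of_card_ne_zero (by rw [Nat.card_zmultiples, hm]; exact pow_ne_zero m hp.ne_zero)
    refine Set.Finite.eq_of_subset_of_encard_le (Set.toFinite _) ?_ ?_
    · rintro _ ⟨k, rfl⟩
      change p ^ m • k • w = 0
      rw [smul_comm, ← hm, addOrderOf_nsmul_eq_zero, smul_zero]
    · refine (AddCircle.card_torsion_le_of_isSMulRegular (1 : ℚ) (p ^ m) (pow_ne_zero m hp.ne_zero)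
        (IsSMulRegular.of_ne_zero (pow_ne_zero m hp.ne_zero))).trans ?_
      rw [← Set.Finite.cast_ncard_eq (Set.toFinite _), ← hm, ← Nat.card_zmultiples,
        ← Nat.card_coe_set_eq]
      rfl
  have hy' : y ∈ (AddSubgroup.zmultiples w : Set RatCircle) := by
    rw [htorsion]
    change p ^ m • y = 0
    rw [← Nat.sub_add_cancel hnm, pow_add, mul_smul, hy, smul_zero]
  exact (AddSubgroup.zmultiples_le_of_mem hwS) hy'

end Prufer

section FiniteRank

/-- Characters separating the finitely many nonzero elements of order `p` are jointly injective, so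
one of them has infinite image. -/
lemma exists_surjective_pruferSubgroup {T : Type*} [AddCommGroup T] [Infinite T] {p : ℕ}
    (hp : p.Prime) (hT : ∀ t : T, ∃ n : ℕ, p ^ n • t = 0) (hfin : {t : T | p • t = 0}.Finite) :
    ∃ f : T →+ pruferSubgroup p, Function.Surjective f := by
  have hprufer (c : T →+ RatCircle) : c.range ≤ pruferSubgroup p := by
    rintro _ ⟨t, rfl⟩
    obtain ⟨n, hn⟩ := hT t
    exact ⟨n, by rw [← map_nsmul, hn, map_zero]⟩
  by_contra! hsurj
  have hrange (c : T →+ RatCircle) : Finite c.range := by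
    by_contra hinf
    have hle := pruferSubgroup_le_of_infinite hp (hprufer c)
      (Set.infinite_coe_iff.1 (not_finite_iff_infinite.1 hinf))
    refine hsurj (c.codRestrict (pruferSubgroup p) fun t => hprufer c ⟨t, rfl⟩) ?_
    rintro ⟨x, hx⟩
    obtain ⟨t, ht⟩ := hle hx
    exact ⟨t, Subtype.ext ht⟩
  have : Finite {t : T | p • t = 0} := hfin
  choose c hc using fun x : {x : {t : T | p • t = 0} // x.1 ≠ 0} =>
    CharacterModule.exists_character_apply_ne_zero_of_ne_zero x.2
  let c' (x : {x : {t : T | p • t = 0} // x.1 ≠ 0}) : T →+ RatCircle := c x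
  let F : T →+ ∀ x, (c' x).range := AddMonoidHom.pi fun x => (c' x).rangeRestrict
  refine not_finite_iff_infinite.2 ‹Infinite T›
    (Finite.of_injective F ((injective_iff_map_eq_zero F).2 fun t ht => ?_))
  by_contra ht0
  obtain ⟨n, hn0, hn⟩ : ∃ n, p ^ n • t ≠ 0 ∧ p ^ (n + 1) • t = 0 := by
    have hex := hT t
    classical
    have hpos : Nat.find hex ≠ 0 := fun h => ht0 (by simpa [h] using Nat.find_spec hex)
    refine ⟨Nat.find hex - 1, Nat.find_min hex (by lia), ?_⟩
    rw [Nat.sub_add_cancel (Nat.one_le_iff_ne_zero.2 hpos)]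
    exact Nat.find_spec hex
  have hmem : p • p ^ n • t = 0 := by rwa [← mul_smul, ← pow_succ']
  refine hc ⟨⟨p ^ n • t, hmem⟩, hn0⟩ ?_
  rw [map_nsmul]
  exact (congrArg (p ^ n • ·) (congrArg Subtype.val (congrFun ht ⟨⟨p ^ n • t, hmem⟩, hn0⟩))).trans
    (smul_zero _)

lemma finite_submodule_of_fg_of_torsion {M : Type*} [AddCommGroup M] {S : Submodule ℤ M}
    (hS : S.FG) (htors : ∀ m ∈ S, IsOfFinAddOrder m) : Finite S := by
  have : AddGroup.FG S := Module.Finite.iff_addGroup_fg.1 (Module.Finite.iff_fg.2 hS)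
  exact AddCommGroup.finite_of_fg_isAddTorsion S fun m =>
    (Function.Injective.isOfFinAddOrder_iff (f := S.subtype.toAddMonoidHom)
      Subtype.val_injective).1 (htors m m.2)

variable {M : Type*} [AddCommGroup M] {p : ℕ}

lemma finite_setOf_nsmul_eq_zero_quotient {F : Submodule ℤ M} (hF : F.FG) (hp : p ≠ 0)
    (hfin : {m : M | p • m = 0}.Finite) : {x : M ⧸ F | p • x = 0}.Finite := by
  let f : M →ₗ[ℤ] M := p • LinearMap.id
  have hker : (F.comap f ⊓ f.ker).FG := by
    have : Finite f.ker := hfin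
    exact (Module.Finite.iff_fg.1 inferInstance : f.ker.FG).of_le inf_le_right
  have hfg : ((F.comap f).map F.mkQ).FG :=
    (Submodule.fg_of_fg_map_of_fg_inf_ker f (hF.of_le (Submodule.map_comap_le f F)) hker).map _
  have hquot (m : M) : p • F.mkQ m = 0 ↔ m ∈ F.comap f := by
    rw [← map_nsmul, Submodule.mkQ_apply, Submodule.Quotient.mk_eq_zero]
    rfl
  have hfinite : Finite ((F.comap f).map F.mkQ) := by
    refine finite_submodule_of_fg_of_torsion hfg ?_
    rintro _ ⟨m, hm, rfl⟩
    exact isOfFinAddOrder_iff_nsmul_eq_zero.2 ⟨p, Nat.pos_of_ne_zero hp, (hquot m).2 hm⟩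
  refine Set.Finite.subset (s := ((F.comap f).map F.mkQ : Set (M ⧸ F))) hfinite fun x hx => ?_
  obtain ⟨m, rfl⟩ := F.mkQ_surjective x
  exact ⟨m, (hquot m).1 hx, rfl⟩

lemma LocallyFG.of_not_hasQuasicyclicSection (hp : p.Prime) (h₀ : LocallyFG ℤ 0 M)
    (hfin : {m : M | p • m = 0}.Finite) (hsec : ¬HasQuasicyclicSection (Multiplicative M) p) :
    LocallyFG ℤ p M := by
  obtain ⟨F, hF, h₀⟩ := h₀
  let T : Submodule ℤ (M ⧸ F) := Submodule.torsion' ℤ (M ⧸ F) (Submonoid.powers p)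
  have hT (t : T) : ∃ n : ℕ, p ^ n • t = 0 := by
    obtain ⟨⟨_, n, rfl⟩, hn⟩ := t.2
    exact ⟨n, Subtype.ext hn⟩
  have hTfin : {t : T | p • t = 0}.Finite :=
    ((finite_setOf_nsmul_eq_zero_quotient hF hp.ne_zero hfin).preimage
      Subtype.val_injective.injOn).subset fun t ht => congrArg Subtype.val ht
  have hfinite : Finite T := by
    by_contra hinf
    have : Infinite T := not_finite_iff_infinite.1 hinf
    obtain ⟨f, hf⟩ := exists_surjective_pruferSubgroup hp hT hTfin
    refine hsec (hasQuasicyclicSection_multiplicative_iff.2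
      ⟨(T.comap F.mkQ).toAddSubgroup,
        f.comp ((F.mkQ.restrict (p := T.comap F.mkQ) (q := T) fun _ h => h).toAddMonoidHom),
        hf.comp ?_⟩)
    rintro ⟨t, ht⟩
    obtain ⟨m, rfl⟩ := F.mkQ_surjective t
    exact ⟨⟨m, ht⟩, rfl⟩
  refine ⟨T.comap F.mkQ, Submodule.fg_of_fg_map_of_fg_inf_ker F.mkQ
    ((Module.Finite.iff_fg.1 inferInstance : T.FG).of_le (Submodule.map_comap_le _ _))
    (hF.of_le (by simp)), fun m => ?_⟩
  obtain ⟨k, hk, hkm⟩ := h₀ m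
  obtain ⟨n, l, hl, rfl⟩ := Nat.exists_eq_pow_mul_and_not_dvd (by simpa using hk) p hp.ne_one
  refine ⟨l, hl, ⟨⟨p ^ n, n, rfl⟩, ?_⟩⟩
  change p ^ n • F.mkQ (l • m) = 0
  rwa [← map_nsmul, smul_smul, Submodule.mkQ_apply, Submodule.Quotient.mk_eq_zero]
end FiniteRank

section IsNice

/-- The abelian groups that are torsion-free, of finite rank and `π`-spectral, described by local
finite generation. -/
structure IsNice (π : Set ℕ) (M : Type*) [AddCommGroup M] : Prop where
  isAddTorsionFree : IsAddTorsionFree M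
  locallyFG (p : ℕ) (hp : p = 0 ∨ p.Prime ∧ p ∉ π) : LocallyFG ℤ p M

variable {π : Set ℕ} {M N : Type*} [AddCommGroup M] [AddCommGroup N]

namespace IsNice

lemma of_fg [IsAddTorsionFree M] [Module.Finite ℤ M] : IsNice π M where
  isAddTorsionFree := inferInstance
  locallyFG p hp := LocallyFG.of_finite <| by
    rintro rfl
    exact hp.elim one_ne_zero fun h => Nat.not_prime_one h.1

lemma of_injective (f : N →+ M) (hf : Function.Injective f) (h : IsNice π M) : IsNice π N where
  isAddTorsionFree :=
    have := h.isAddTorsionFree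
    hf.isAddTorsionFree
  locallyFG p hp := (h.locallyFG p hp).of_injective f.toIntLinearMap hf

lemma flat [Module ℤ M] (h : IsNice π M) : Module.Flat ℤ M := by
  have := h.isAddTorsionFree
  obtain rfl : ‹Module ℤ M› = AddCommGroup.toIntModule M := Subsingleton.elim _ _
  infer_instance

lemma tensorProduct [Module ℤ M] [Module ℤ N] (hM : IsNice π M) (hN : IsNice π N) :
    IsNice π (TensorProduct ℤ M N) := by
  have := hM.flat
  have := hN.flat
  obtain rfl : ‹Module ℤ M› = AddCommGroup.toIntModule M := Subsingleton.elim _ _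
  obtain rfl : ‹Module ℤ N› = AddCommGroup.toIntModule N := Subsingleton.elim _ _
  have hinst : (TensorProduct.instModule : Module ℤ (TensorProduct ℤ M N)) =
      AddCommGroup.toIntModule _ := Subsingleton.elim _ _
  refine ⟨Module.isTorsionFree_int_iff_isAddTorsionFree.1
    (hinst ▸ Module.Flat.isTorsionFree), fun p hp => hinst ▸ ?_⟩
  refine (hM.locallyFG p hp).tensorProduct (fun a b hab => ?_) ?_ (hN.locallyFG p hp)
  · rcases hp with rfl | hp
    · simpa using hab
    · exact hp.1.dvd_mul.1 hab
  · rintro rfl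
    exact hp.elim one_ne_zero fun h => Nat.not_prime_one h.1

end IsNice

lemma isNice_iff : IsNice π M ↔
    (∀ m : M, m ≠ 0 → ¬IsOfFinAddOrder m) ∧ FiniteRankAbelian M ∧ addSpectrum M ⊆ π := by
  rw [FiniteRankAbelian, ← rank_lt_aleph0_iff_exists_bound, ← locallyFG_zero_iff_rank_lt_aleph0]
  constructor
  · intro h
    have := h.isAddTorsionFree
    refine ⟨isAddTorsionFree_iff_not_isOfFinAddOrder.1 this, ⟨h.locallyFG 0 (.inl rfl),
      fun p hp => ?_⟩, fun p ⟨hp, hsec⟩ => ?_⟩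
    · exact (Set.finite_singleton 0).subset fun m hm => (nsmul_eq_zero_iff_right hp.ne_zero).1 hm
    · by_contra hpπ
      exact (h.locallyFG p (.inr ⟨hp, hpπ⟩)).not_hasQuasicyclicSection hp hsec
  · rintro ⟨htf, ⟨h₀, hfin⟩, hspec⟩
    refine ⟨isAddTorsionFree_iff_not_isOfFinAddOrder.2 htf, ?_⟩
    rintro p (rfl | ⟨hp, hpπ⟩)
    · exact h₀
    · exact h₀.of_not_hasQuasicyclicSection hp (hfin p hp) fun hsec => hpπ (hspec ⟨hp, hsec⟩)

lemma niceRep_iff {π : Set ℕ} {M : Rep.{0} ℤ G} : NiceRep π M ↔ IsNice π M :=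
  isNice_iff.symm

end IsNice

section Rep

open Limits MonoidalCategory

attribute [local instance 10000] Rep.hV2

/-- The morphism of `ℤG`-modules given by an equivariant additive map. -/
def repHom {A B : Rep.{0} ℤ G} (f : A →+ B) (hf : ∀ g a, f (A.ρ g a) = B.ρ g (f a)) : A ⟶ B :=
  Rep.ofHom
    { toFun := f
      map_add' := map_add f
      map_smul' := fun c x => map_intCast_smul f ℤ ℤ c x
      isIntertwining' := fun g => LinearMap.ext fun a => hf g a }

lemma rep_hom_ext {A B : Rep.{0} ℤ G} {f g : A ⟶ B} (h : ∀ a, f.hom a = g.hom a) : f = g :=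
  Rep.hom_ext (Representation.IntertwiningMap.ext (LinearMap.ext h))

lemma rep_exact_iff (S : ShortComplex (Rep.{0} ℤ G)) :
    S.Exact ↔ ∀ x : S.X₂, S.g.hom x = 0 → ∃ y : S.X₁, S.f.hom y = x := by
  rw [← S.exact_map_iff_of_faithful (forget₂ (Rep.{0} ℤ G) (ModuleCat.{0} ℤ)),
    ShortComplex.moduleCat_exact_iff]
  rfl

lemma rep_shortExact_iff (S : ShortComplex (Rep.{0} ℤ G)) :
    S.ShortExact ↔ (∀ x : S.X₂, S.g.hom x = 0 → ∃ y : S.X₁, S.f.hom y = x) ∧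
      Function.Injective S.f.hom ∧ Function.Surjective S.g.hom := by
  rw [← Rep.mono_iff_injective, ← Rep.epi_iff_surjective, ← rep_exact_iff]
  exact ⟨fun h => ⟨h.exact, h.mono_f, h.epi_g⟩, fun ⟨h, _, _⟩ => ⟨h⟩⟩

lemma rep_zero_apply {S : ShortComplex (Rep.{0} ℤ G)} (x : S.X₁) : S.g.hom (S.f.hom x) = 0 :=
  congrArg (fun f : S.X₁ ⟶ S.X₃ => f.hom x) S.zero

/-- The permutation module `ℤ[X]` of a `G`-set `X`, with carrier `X →₀ ℤ`. -/
def permRepresentation (G : Type) [Group G] (X : Type) [MulAction G X] :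
    Representation ℤ G (X →₀ ℤ) where
  toFun g := Finsupp.lmapDomain ℤ ℤ fun x : X => g • x
  map_one' := by ext x y; simp
  map_mul' g h := by ext x y; simp [mul_smul]

/-- The permutation module `ℤ[X]` as an object of `Rep ℤ G`. -/
abbrev permRep (X : Type) [MulAction G X] : Rep.{0} ℤ G := Rep.of (permRepresentation G X)

lemma permRep_ρ_single {X : Type} [MulAction G X] (g : G) (x : X) (c : ℤ) :
    (permRep (G := G) X).ρ g (Finsupp.single x c) = Finsupp.single (g • x) c :=
  Finsupp.mapDomain_single

/-- The action of `G` on the underlying set of a `ℤG`-module. -/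
abbrev repMulAction (A : Rep.{0} ℤ G) : MulAction G A where
  smul g a := A.ρ g a
  one_smul a := by change A.ρ 1 a = a; simp
  mul_smul g h a := by change A.ρ (g * h) a = A.ρ g (A.ρ h a); simp

lemma exists_epi_of_finite {π : Set ℕ} (A : Rep.{0} ℤ G) (hA : Finite A) :
    ∃ (B : Rep.{0} ℤ G) (_ : NiceRep π B) (f : B ⟶ A), Epi f := by
  let _ := repMulAction A
  let F : (A →₀ ℤ) →+ A := Finsupp.liftAddHom fun a : A => zmultiplesHom A a
  have hF (a : A) (c : ℤ) : F (Finsupp.single a c) = c • a :=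
    Finsupp.liftAddHom_apply_single (fun a : A => zmultiplesHom A a) a c
  refine ⟨permRep A, niceRep_iff.2 (IsNice.of_fg (M := A →₀ ℤ)), repHom F fun g x => ?_, ?_⟩
  · induction x using Finsupp.induction_linear with
    | zero => simp only [map_zero]
    | add x y hx hy => simp only [map_add, hx, hy]
    | single a c =>
      rw [permRep_ρ_single, hF, hF, map_zsmul]
      rfl
  · rw [Rep.epi_iff_surjective]
    intro a
    exact ⟨Finsupp.single a 1, (hF a 1).trans (one_zsmul a)⟩

end Rep

section SerreClass

open Limits MonoidalCategory

attribute [local instance 10000] Rep.hV2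

variable {π : Set ℕ}

lemma MemC.induction_nice {P : Rep.{0} ℤ G → Prop}
    (nice : ∀ A, NiceRep π A → P A)
    (quot : ∀ (A B : Rep.{0} ℤ G) (f : A ⟶ B) [Epi f], MemC G π A → P A → P B)
    (ext : ∀ S : ShortComplex (Rep.{0} ℤ G), S.ShortExact → P S.X₁ → P S.X₃ → P S.X₂)
    {A : Rep.{0} ℤ G} (hA : MemC G π A) : P A := by
  induction hA with
  | of_finite A h =>
    obtain ⟨B, hB, f, hf⟩ := exists_epi_of_finite (π := π) A h
    exact quot B A f (.of_nice B hB) (nice B hB)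
  | of_nice A h => exact nice A h
  | quot A B f hf hA ih =>
    have := (Rep.epi_iff_surjective f).2 hf
    exact quot A B f hA ih
  | ext A B C f g hinj hsurj hexact _ _ ihA ihC =>
    refine ext (ShortComplex.mk f g (rep_hom_ext fun a => (hexact _).2 ⟨a, rfl⟩)) ?_ ihA ihC
    exact (rep_shortExact_iff _).2 ⟨fun x => (hexact x).1, hinj, hsurj⟩

/-- The class `𝔠(G, π)` as an object property. -/
def classC (G : Type) [Group G] (π : Set ℕ) : ObjectProperty (Rep.{0} ℤ G) := MemC G π

instance : (classC G π).ContainsZero where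
  exists_zero := by
    have hz := isZero_zero (Rep.{0} ℤ G)
    have := (Rep.isZero_iff ℤ G _).1 hz
    exact ⟨_, hz, MemC.of_finite _ inferInstance⟩

instance : (classC G π).IsClosedUnderQuotients where
  prop_of_epi {A B} f hf hA := MemC.quot A B f ((Rep.epi_iff_surjective f).1 hf) hA

instance : (classC G π).IsClosedUnderExtensions where
  prop_X₂_of_shortExact {S} hS h₁ h₃ := by
    obtain ⟨hexact, hinj, hsurj⟩ := (rep_shortExact_iff S).1 hS
    refine MemC.ext S.X₁ S.X₂ S.X₃ S.f S.g hinj hsurj (fun x => ⟨hexact x, ?_⟩) h₁ h₃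
    rintro ⟨y, rfl⟩
    exact rep_zero_apply y

lemma exists_shortExact_of_mono {C : Type*} [Category* C] [Abelian C] {S : ShortComplex C}
    (hS : S.ShortExact) {B : C} (i : B ⟶ S.X₂) [Mono i] :
    ∃ (K Q : C) (f : K ⟶ B) (g : B ⟶ Q) (w : f ≫ g = 0) (j : K ⟶ S.X₁) (k : Q ⟶ S.X₃),
      (ShortComplex.mk f g w).ShortExact ∧ Mono j ∧ Mono k := by
  have := hS.mono_f
  let q := Abelian.factorThruImage (i ≫ S.g)
  have hq : q ≫ Abelian.image.ι (i ≫ S.g) = i ≫ S.g := Abelian.image.fac _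
  have w : kernel.ι (i ≫ S.g) ≫ q = 0 := by
    rw [← cancel_mono (Abelian.image.ι _), Category.assoc, hq, kernel.condition, zero_comp]
  let j := hS.exact.lift (kernel.ι (i ≫ S.g) ≫ i) (by rw [Category.assoc, kernel.condition])
  have hj : j ≫ S.f = kernel.ι (i ≫ S.g) ≫ i := hS.exact.lift_f _ _
  refine ⟨_, _, kernel.ι (i ≫ S.g), q, w, j, Abelian.image.ι (i ≫ S.g), ⟨?_⟩,
    mono_of_mono_fac hj, inferInstance⟩
  let φ : ShortComplex.mk (kernel.ι (i ≫ S.g)) q w ⟶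
      ShortComplex.mk (kernel.ι (i ≫ S.g)) (i ≫ S.g) (kernel.condition _) :=
    { τ₁ := 𝟙 _, τ₂ := 𝟙 _, τ₃ := Abelian.image.ι (i ≫ S.g) }
  exact (ShortComplex.exact_iff_of_epi_of_isIso_of_mono φ).2
    (ShortComplex.exact_of_f_is_kernel _ (kernelIsKernel _))

lemma MemC.induction_of_mono {P : Rep.{0} ℤ G → Prop} (nice : ∀ A, NiceRep π A → P A)
    (quot : ∀ S : ShortComplex (Rep.{0} ℤ G), S.ShortExact → P S.X₁ → P S.X₂ → P S.X₃)
    (ext : ∀ S : ShortComplex (Rep.{0} ℤ G), S.ShortExact → P S.X₁ → P S.X₃ → P S.X₂)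
    {A B : Rep.{0} ℤ G} (hA : MemC G π A) (i : B ⟶ A) (hi : Mono i) : P B := by
  refine MemC.induction_nice (P := fun A => ∀ B (i : B ⟶ A), Mono i → P B)
    (fun A hA B i hi => ?_) (fun A A' f _ _ ih B i _ => ?_) (fun S hS h₁ h₃ B i _ => ?_)
    hA B i hi
  · exact nice B <| niceRep_iff.2 <| (niceRep_iff.1 hA).of_injective
      i.hom.toLinearMap.toAddMonoidHom ((Rep.mono_iff_injective i).1 hi)
  · let p := pullback.snd f i
    exact quot (ShortComplex.mk (kernel.ι p) p (kernel.condition p))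
      { exact := ShortComplex.exact_of_f_is_kernel _ (kernelIsKernel p) }
      (ih _ (kernel.ι p ≫ pullback.fst f i) inferInstance)
      (ih _ (pullback.fst f i) inferInstance)
  · obtain ⟨K, Q, f, g, w, j, k, hT, hj, hk⟩ := exists_shortExact_of_mono hS i
    exact ext _ hT (h₁ K j hj) (h₃ Q k hk)

instance : (classC G π).IsClosedUnderSubobjects where
  prop_of_mono i hi hA := MemC.induction_of_mono (P := classC G π) MemC.of_nice
    (fun S hS _ h₂ => have := hS.epi_g; (classC G π).prop_of_epi S.g h₂)
    (fun _ hS => (classC G π).prop_X₂_of_shortExact hS) hA i hi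

instance : (classC G π).IsSerreClass where

lemma rep_exact_tensorRight {A : Rep.{0} ℤ G} [Module.Flat ℤ A] {S : ShortComplex (Rep.{0} ℤ G)}
    (hS : S.Exact) : (S.map (tensorRight A)).Exact := by
  rw [rep_exact_iff] at hS ⊢
  have h : Function.Exact S.f.hom.toLinearMap S.g.hom.toLinearMap := fun x =>
    ⟨hS x, by rintro ⟨y, rfl⟩; exact rep_zero_apply y⟩
  exact fun x hx => (Module.Flat.rTensor_exact (M := (A : Type)) h x).1 hx

lemma rep_shortExact_tensorRight {A : Rep.{0} ℤ G} [Module.Flat ℤ A]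
    {S : ShortComplex (Rep.{0} ℤ G)} (hS : S.ShortExact) :
    (S.map (tensorRight A)).ShortExact := by
  have hexact := (rep_exact_iff _).1 (rep_exact_tensorRight (A := A) hS.exact)
  rw [rep_shortExact_iff] at hS ⊢
  exact ⟨hexact,
    Module.Flat.rTensor_preserves_injective_linearMap (M := (A : Type)) S.f.hom.toLinearMap hS.2.1,
    LinearMap.rTensor_surjective (Q := (A : Type)) (g := S.g.hom.toLinearMap) hS.2.2⟩

lemma classC_tensor {A M : Rep.{0} ℤ G} (hA : NiceRep π A) (hM : classC G π M) :
    classC G π (M ⊗ A) := by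
  have := (niceRep_iff.1 hA).flat
  refine MemC.induction_nice (P := fun M => classC G π (M ⊗ A)) (fun M hM => ?_)
    (fun M N f hf _ h => ?_)
    (fun S hS h₁ h₃ => (classC G π).prop_X₂_of_shortExact (rep_shortExact_tensorRight hS) h₁ h₃) hM
  · exact MemC.of_nice _ (niceRep_iff.2 ((niceRep_iff.1 hM).tensorProduct (niceRep_iff.1 hA)))
  · have : Epi (f ▷ A) := by
      rw [Rep.epi_iff_surjective] at hf ⊢
      exact LinearMap.rTensor_surjective (Q := (A : Type)) (g := f.hom.toLinearMap) hf
    exact (classC G π).prop_of_epi (f ▷ A) h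

end SerreClass

section ClassifyingSpace

attribute [local instance 10000] Rep.hV2

/-- An `n`-simplex of the classifying space of an abelian group `A`: its edges `i → j` are
labelled by elements of `A` in such a way that all triangles commute. Labelling all pairs
`(i, j)` makes every map of vertices, not only the monotone ones, act by reindexing. -/
@[ext]
structure DiffSimplex (A : Type) [AddCommGroup A] (n : ℕ) where
  /-- The label of the edge `i → j`. -/
  diff : Fin (n + 1) → Fin (n + 1) → A
  diff_add_diff : ∀ i j k, diff i j + diff j k = diff i k

namespace DiffSimplex

variable {A B C : Type} [AddCommGroup A] [AddCommGroup B] [AddCommGroup C] {n m l : ℕ}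

/-- The face or degeneracy of a simplex along a map of vertices. -/
def reindex (θ : Fin (m + 1) → Fin (n + 1)) (c : DiffSimplex A n) : DiffSimplex A m where
  diff i j := c.diff (θ i) (θ j)
  diff_add_diff _ _ _ := c.diff_add_diff _ _ _

/-- The image of a simplex under a group homomorphism. -/
def map (f : A →+ B) (c : DiffSimplex A n) : DiffSimplex B n where
  diff i j := f (c.diff i j)
  diff_add_diff i j k := by rw [← map_add, c.diff_add_diff]

/-- The simplex spanned by a tuple of elements of `A`. -/
def ofVertices (u : Fin (n + 1) → A) : DiffSimplex A n where
  diff i j := u j - u i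
  diff_add_diff i j k := by abel

@[simp]
lemma diff_self (c : DiffSimplex A n) (i : Fin (n + 1)) : c.diff i i = 0 := by
  simpa using c.diff_add_diff i i i

lemma diff_sub_diff (c : DiffSimplex A n) (i j k : Fin (n + 1)) :
    c.diff i k - c.diff i j = c.diff j k := by
  rw [← c.diff_add_diff i j k, add_sub_cancel_left]

instance (A : Rep.{0} ℤ G) (n : ℕ) : MulAction G (DiffSimplex A n) where
  smul g c := map (A.ρ g).toAddMonoidHom c
  one_smul c := by
    ext i j
    change A.ρ 1 _ = _
    simp
  mul_smul g h c := by
    ext i j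
    change A.ρ (g * h) _ = A.ρ g (A.ρ h _)
    simp

lemma reindex_smul {A : Rep.{0} ℤ G} (θ : Fin (m + 1) → Fin (n + 1)) (g : G)
    (c : DiffSimplex A n) : reindex θ (g • c) = g • reindex θ c := rfl

/-- The image of a simplex under a morphism of `ℤG`-modules. -/
abbrev mapRep {A B : Rep.{0} ℤ G} (f : A ⟶ B) : DiffSimplex A n → DiffSimplex B n :=
  map (f.hom.toLinearMap : A →+ B)

lemma mapRep_smul {A B : Rep.{0} ℤ G} (f : A ⟶ B) (g : G) (c : DiffSimplex A n) :
    mapRep f (g • c) = g • mapRep f c :=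
  DiffSimplex.ext <| funext₂ fun i j => Rep.hom_comm_apply f g (c.diff i j)

end DiffSimplex

/-- The morphism of permutation modules induced by an equivariant map. -/
def permRepMap {S T : Type} [MulAction G S] [MulAction G T] (f : S → T)
    (hf : ∀ (g : G) s, f (g • s) = g • f s) : permRep (G := G) S ⟶ permRep T :=
  repHom (A := permRep S) (B := permRep T) (Finsupp.mapDomain.addMonoidHom f) fun g x => by
    change Finsupp.mapDomain f (Finsupp.mapDomain _ x) =
      Finsupp.mapDomain _ (Finsupp.mapDomain f x)
    rw [← Finsupp.mapDomain_comp, ← Finsupp.mapDomain_comp]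
    exact congrArg (Finsupp.mapDomain · x) (funext (hf g))

lemma permRepMap_id (S : Type) [MulAction G S] :
    permRepMap (G := G) (id : S → S) (fun _ _ => rfl) = 𝟙 _ :=
  rep_hom_ext fun _ => Finsupp.mapDomain_id

lemma permRepMap_comp_eq {S T U : Type} [MulAction G S] [MulAction G T] [MulAction G U]
    {f : S → T} {hf : ∀ (g : G) s, f (g • s) = g • f s} {f' : T → U}
    {hf' : ∀ (g : G) s, f' (g • s) = g • f' s} {f'' : S → U}
    {hf'' : ∀ (g : G) s, f'' (g • s) = g • f'' s} (h : ∀ s, f' (f s) = f'' s) :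
    permRepMap f hf ≫ permRepMap f' hf' = permRepMap f'' hf'' := by
  obtain rfl : f' ∘ f = f'' := funext h
  exact rep_hom_ext fun _ => Finsupp.mapDomain_comp.symm

lemma permRepMap_comm {S T T' U : Type} [MulAction G S] [MulAction G T] [MulAction G T']
    [MulAction G U] {f : S → T} {hf : ∀ (g : G) s, f (g • s) = g • f s} {k : T → U}
    {hk : ∀ (g : G) s, k (g • s) = g • k s} {f' : S → T'}
    {hf' : ∀ (g : G) s, f' (g • s) = g • f' s} {k' : T' → U}
    {hk' : ∀ (g : G) s, k' (g • s) = g • k' s} (h : ∀ s, k (f s) = k' (f' s)) :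
    permRepMap f hf ≫ permRepMap k hk = permRepMap f' hf' ≫ permRepMap k' hk' :=
  (permRepMap_comp_eq (hf'' := fun g s => by rw [← hk', ← hf']) h).trans
    (permRepMap_comp_eq fun _ => rfl).symm

/-- The simplicial `ℤG`-module freely generated by the simplices of the classifying space of
`A`. -/
def barSimplicialObj (A : Rep.{0} ℤ G) : SimplicialObject (Rep.{0} ℤ G) where
  obj n := permRep (DiffSimplex A n.unop.len)
  map θ := permRepMap (DiffSimplex.reindex θ.unop.toOrderHom) (DiffSimplex.reindex_smul _)
  map_id _ := permRepMap_id _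
  map_comp θ θ' := by
    refine (permRepMap_comp_eq ?_).symm
    exact fun _ => rfl

/-- The action of a morphism of `ℤG`-modules on `n`-chains. -/
def barChainMap {A B : Rep.{0} ℤ G} (f : A ⟶ B) (n : ℕ) :
    permRep (G := G) (DiffSimplex A n) ⟶ permRep (DiffSimplex B n) :=
  permRepMap (DiffSimplex.mapRep f) (DiffSimplex.mapRep_smul f)

lemma barChainMap_comp {A B C : Rep.{0} ℤ G} (f : A ⟶ B) (g : B ⟶ C) (n : ℕ) :
    barChainMap (f ≫ g) n = barChainMap f n ≫ barChainMap g n :=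
  (permRepMap_comp_eq (hf := DiffSimplex.mapRep_smul f) (hf' := DiffSimplex.mapRep_smul g)
    (hf'' := DiffSimplex.mapRep_smul (f ≫ g)) fun _ => rfl).symm

/-- The functor sending a `ℤG`-module `A` to `barSimplicialObj A`. -/
def barSimplicial : Rep.{0} ℤ G ⥤ SimplicialObject (Rep.{0} ℤ G) where
  obj := barSimplicialObj
  map f :=
    { app n := barChainMap f n.unop.len
      naturality n m θ := by
        refine permRepMap_comm (hf := DiffSimplex.reindex_smul _)
          (hk' := DiffSimplex.reindex_smul _) ?_
        exact fun _ => rfl }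
  map_id A := NatTrans.ext (funext fun n => permRepMap_id (DiffSimplex A n.unop.len))
  map_comp f g := NatTrans.ext (funext fun n => barChainMap_comp f g n.unop.len)

/-- The complex of `ℤG`-modules computing the integral homology of the abelian group underlying
a `ℤG`-module. -/
def barComplex : Rep.{0} ℤ G ⥤ ChainComplex (Rep.{0} ℤ G) ℕ :=
  barSimplicial ⋙ alternatingFaceMapComplex (Rep.{0} ℤ G)

/-- The integral homology of the abelian group underlying a `ℤG`-module, as a `ℤG`-module. -/
abbrev barHomology (n : ℕ) : Rep.{0} ℤ G ⥤ Rep.{0} ℤ G :=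
  barComplex ⋙ HomologicalComplex.homologyFunctor (Rep.{0} ℤ G) (ComplexShape.down ℕ) n

/-- The alternating sum of a family of face maps, on chains with coefficients in `M`. -/
def altFaceSum {S T M : Type} [AddCommGroup M] {n : ℕ} (d : Fin n → S → T) :
    (S →₀ M) →+ (T →₀ M) :=
  ∑ i : Fin n, (-1 : ℤ) ^ (i : ℕ) • Finsupp.mapDomain.addMonoidHom (d i)

lemma altFaceSum_apply {S T M : Type} [AddCommGroup M] {n : ℕ} (d : Fin n → S → T)
    (x : S →₀ M) :
    altFaceSum d x = ∑ i : Fin n, (-1 : ℤ) ^ (i : ℕ) • Finsupp.mapDomain (d i) x := by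
  simp [altFaceSum]

lemma altFaceSum_mapDomain {S S' T T' M : Type} [AddCommGroup M] {n : ℕ} {d : Fin n → S → T}
    {d' : Fin n → S' → T'} {f : S → S'} {f' : T → T'} (h : ∀ i s, d' i (f s) = f' (d i s))
    (x : S →₀ M) :
    altFaceSum d' (Finsupp.mapDomain f x) = Finsupp.mapDomain f' (altFaceSum d x) := by
  have hcomp (i : Fin n) : d' i ∘ f = f' ∘ d i := funext (h i)
  simp only [altFaceSum_apply, Finsupp.mapDomain_finsetSum, Finsupp.mapDomain_smul,
    ← Finsupp.mapDomain_comp, hcomp]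

lemma sum_permRepMap_apply {S T : Type} [MulAction G S] [MulAction G T] {n : ℕ}
    (d : Fin n → S → T) (hd : ∀ i (g : G) s, d i (g • s) = g • d i s) (x : S →₀ ℤ) :
    (∑ i : Fin n, (-1 : ℤ) ^ (i : ℕ) • permRepMap (d i) (hd i)).hom x = altFaceSum d x := by
  refine (congrArg (· x) (Rep.sum_hom (A := permRep (G := G) S) (B := permRep (G := G) T)
    _ _)).trans ?_
  rw [Representation.IntertwiningMap.sum_apply, altFaceSum_apply]
  rfl

/-- The differential of the complex of chains on the classifying space of `A`, with
coefficients in `M`. -/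
def barBoundary (A : Type) [AddCommGroup A] {M : Type} [AddCommGroup M] (n : ℕ) :
    (DiffSimplex A (n + 1) →₀ M) →+ (DiffSimplex A n →₀ M) :=
  altFaceSum fun i : Fin (n + 2) => DiffSimplex.reindex i.succAbove

lemma barComplex_d_apply (A : Rep.{0} ℤ G) (n : ℕ) (x : DiffSimplex A (n + 1) →₀ ℤ) :
    ((barComplex.obj A).d (n + 1) n).hom x = barBoundary A n x := by
  have hd : (barComplex.obj A).d (n + 1) n =
      ∑ i : Fin (n + 2), (-1 : ℤ) ^ (i : ℕ) • (barSimplicial.obj A).δ i :=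
    AlternatingFaceMapComplex.obj_d_eq _ n
  exact (congrArg (fun φ => φ.hom x) hd).trans
    (sum_permRepMap_apply _ (fun i => DiffSimplex.reindex_smul i.succAbove) x)

end ClassifyingSpace

section SerreResolution

open Limits HomologicalComplex

variable {C : Type*} [Category* C] [Abelian C] (P : ObjectProperty C) [P.IsSerreClass]

lemma epiModSerre_of_exact {S : ShortComplex C} (hS : S.Exact) (h : P S.X₃) :
    P.epiModSerre S.f :=
  have := hS.mono_cokernelDesc
  P.prop_of_mono (cokernel.desc S.f S.g S.zero) h

lemma prop_of_epiModSerre {X Y : C} {f : X ⟶ Y} (hf : P.epiModSerre f) (h : P X) : P Y :=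
  P.prop_X₂_of_exact (ShortComplex.exact_of_g_is_cokernel
    (ShortComplex.mk f (cokernel.π f) (cokernel.condition f)) (cokernelIsCokernel f)) h hf

lemma epiModSerre_of_comp_monoModSerre {X Y Z : C} {f : X ⟶ Y} {g : Y ⟶ Z}
    (h : P.epiModSerre (f ≫ g)) (hg : P.monoModSerre g) : P.epiModSerre f :=
  P.prop_X₂_of_exact ((kernelCokernelCompSequence_exact f g).exact 2) hg h

lemma monoModSerre_of_exact {W : C} {S : ShortComplex C} (hS : S.Exact) {f : W ⟶ S.X₁}
    (hf : P.epiModSerre f) (h : f ≫ S.f = 0) : P.monoModSerre S.g := by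
  have := hS.epi_kernelLift
  have h0 : f ≫ kernel.lift S.g S.f S.zero = 0 := by
    rw [← cancel_mono (kernel.ι S.g), Category.assoc, kernel.lift_ι, h, zero_comp]
  have : Epi (cokernel.desc f (kernel.lift S.g S.f S.zero) h0) :=
    epi_of_epi_fac (cokernel.π_desc f _ h0)
  exact P.prop_of_epi (cokernel.desc f (kernel.lift S.g S.f S.zero) h0) hf

/-- A resolution `⋯ ⟶ X 1 ⟶ X 0 ⟶ Z ⟶ 0` of a chain complex `Z` by chain complexes. -/
structure ComplexResolution (C : Type*) [Category* C] [Abelian C] where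
  /-- The resolved complex. -/
  Z : ChainComplex C ℕ
  /-- The terms of the resolution. -/
  X : ℕ → ChainComplex C ℕ
  /-- The differentials of the resolution. -/
  d : ∀ p, X (p + 1) ⟶ X p
  /-- The augmentation. -/
  ε : X 0 ⟶ Z
  epi_ε : Epi ε
  d_ε : d 0 ≫ ε = 0
  d_comp_d : ∀ p, d (p + 1) ≫ d p = 0
  exact₀ : (ShortComplex.mk _ _ d_ε).Exact
  exact : ∀ p, (ShortComplex.mk _ _ (d_comp_d p)).Exact

namespace ComplexResolution

/-- The resolution of the kernel of the augmentation obtained by discarding `X 0`. -/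
def shift (R : ComplexResolution C) : ComplexResolution C where
  Z := kernel R.ε
  X p := R.X (p + 1)
  d p := R.d (p + 1)
  ε := kernel.lift R.ε (R.d 0) R.d_ε
  epi_ε := R.exact₀.epi_kernelLift
  d_ε := by rw [← cancel_mono (kernel.ι R.ε), Category.assoc, kernel.lift_ι, R.d_comp_d, zero_comp]
  d_comp_d p := R.d_comp_d (p + 1)
  exact₀ := by
    have w : R.d (0 + 1) ≫ kernel.lift R.ε (R.d 0) R.d_ε = 0 := by
      rw [← cancel_mono (kernel.ι R.ε), Category.assoc, kernel.lift_ι, R.d_comp_d, zero_comp]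
    let φ : ShortComplex.mk _ _ w ⟶ ShortComplex.mk _ _ (R.d_comp_d 0) :=
      { τ₁ := 𝟙 _, τ₂ := 𝟙 _, τ₃ := kernel.ι R.ε }
    exact (ShortComplex.exact_iff_of_epi_of_isIso_of_mono φ).2 (R.exact 0)
  exact p := R.exact (p + 1)

lemma shortExact (R : ComplexResolution C) :
    (ShortComplex.mk (kernel.ι R.ε) R.ε (kernel.condition _)).ShortExact where
  exact := ShortComplex.exact_of_f_is_kernel _ (kernelIsKernel _)
  epi_g := R.epi_ε

variable {P}

lemma epiModSerre_homologyMap_ε {n : ℕ} {R : ComplexResolution C}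
    (h : ∀ p m, m < n → P ((R.X p).homology m)) : P.epiModSerre (homologyMap R.ε n) := by
  induction n generalizing R with
  | zero =>
    have := R.epi_ε
    have := epi_homologyMap_of_epi_of_not_rel R.ε 0 (by simp)
    exact P.epiModSerre_of_epi _
  | succ n ih =>
    have hker := ih (R := R.shift) fun p m hm => h (p + 1) m (by lia)
    exact epiModSerre_of_exact P (R.shortExact.homology_exact₃ (n + 1) n rfl)
      (prop_of_epiModSerre P hker (h 1 n n.lt_succ_self))

lemma monoModSerre_homologyMap_ε {n : ℕ} {R : ComplexResolution C}
    (h : ∀ p m, m < n → P ((R.X p).homology m)) {W : C} {σ : W ⟶ (R.X 1).homology n}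
    (hσ : P.epiModSerre σ) (h0 : σ ≫ homologyMap (R.d 0) n = 0) :
    P.monoModSerre (homologyMap R.ε n) := by
  have hd : homologyMap R.shift.ε n ≫ homologyMap (kernel.ι R.ε) n = homologyMap (R.d 0) n :=
    (homologyMap_comp _ _ n).symm.trans (congrArg (homologyMap · n) (kernel.lift_ι _ _ _))
  have hε := epiModSerre_homologyMap_ε (R := R.shift) fun p m hm => h (p + 1) m hm
  refine monoModSerre_of_exact P (R.shortExact.homology_exact₂ n)
    (P.epiModSerre.comp_mem _ _ hσ hε) ?_
  exact (Category.assoc _ _ _).trans ((congrArg (σ ≫ ·) hd).trans h0)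

end ComplexResolution

end SerreResolution

section CechNerve

open Limits

attribute [local instance 10000] Rep.hV2

lemma altFaceSum_extraDegeneracy {S₀ S₁ S₂ M : Type} [AddCommGroup M] {n : ℕ}
    {d' : Fin (n + 1) → S₂ → S₁} {d : Fin n → S₁ → S₀} {s : S₁ → S₂} {s' : S₀ → S₁}
    (h₀ : ∀ x, d' 0 (s x) = x) (h : ∀ i x, d' i.succ (s x) = s' (d i x)) (x : S₁ →₀ M) :
    altFaceSum d' (Finsupp.mapDomain s x) = x - Finsupp.mapDomain s' (altFaceSum d x) := by
  have hs (i : Fin n) : d' i.succ ∘ s = s' ∘ d i := funext (h i)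
  have h0 : d' 0 ∘ s = id := funext h₀
  simp only [altFaceSum_apply, Fin.sum_univ_succ, ← Finsupp.mapDomain_comp, h0, hs,
    Finsupp.mapDomain_finsetSum, Finsupp.mapDomain_smul, Finsupp.mapDomain_id, Fin.val_zero,
    pow_zero, one_smul, Fin.val_succ, pow_succ, mul_neg_one, neg_smul, Finset.sum_neg_distrib,
    ← sub_eq_add_neg]

variable {B C : Rep.{0} ℤ G} (f : B ⟶ C) {p q : ℕ}

/-- The `(p + 1)`-fold fibre power of `B` over `C`, as a subgroup of `Fin (p + 1) → B`. -/
def fiberPowerSubgroup (p : ℕ) : AddSubgroup (Fin (p + 1) → B) where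
  carrier := {b | ∀ i j, f.hom (b i) = f.hom (b j)}
  zero_mem' _ _ := rfl
  add_mem' ha hb i j := by simp only [Pi.add_apply, map_add, ha i j, hb i j]
  neg_mem' ha i j := by simp only [Pi.neg_apply, map_neg, ha i j]

/-- The diagonal action of `G` on a fibre power. -/
def fiberPowerRepresentation (p : ℕ) : Representation ℤ G (fiberPowerSubgroup f p) where
  toFun g := AddMonoidHom.toIntLinearMap
    { toFun b := ⟨fun i => B.ρ g (b.1 i), fun i j => by
        rw [Rep.hom_comm_apply, Rep.hom_comm_apply, b.2 i j]⟩
      map_zero' := Subtype.ext (funext fun _ => map_zero (B.ρ g))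
      map_add' _ _ := Subtype.ext (funext fun _ => map_add (B.ρ g) _ _) }
  map_one' := LinearMap.ext fun b => Subtype.ext (funext fun i => by
    change B.ρ 1 (b.1 i) = b.1 i
    simp)
  map_mul' g h := LinearMap.ext fun b => Subtype.ext (funext fun i => by
    change B.ρ (g * h) (b.1 i) = B.ρ g (B.ρ h (b.1 i))
    simp)

/-- The `(p + 1)`-fold fibre power of `B` over `C`, as a `ℤG`-module. -/
def fiberPower (p : ℕ) : Rep.{0} ℤ G := Rep.of (fiberPowerRepresentation f p)

/-- The morphism of fibre powers reindexing the coordinates along `θ`. -/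
def fiberPowerMap (θ : Fin (q + 1) → Fin (p + 1)) : fiberPower f p ⟶ fiberPower f q :=
  repHom (A := fiberPower f p) (B := fiberPower f q)
    { toFun b := ⟨b.1 ∘ θ, fun _ _ => b.2 _ _⟩
      map_zero' := rfl
      map_add' _ _ := rfl } fun _ _ => rfl

/-- The structure morphism of a fibre power of `B` over `C`. -/
def fiberPowerBase (p : ℕ) : fiberPower f p ⟶ C :=
  repHom (A := fiberPower f p)
    { toFun b := f.hom (b.1 0)
      map_zero' := map_zero f.hom
      map_add' _ _ := map_add f.hom _ _ } fun g b => Rep.hom_comm_apply f g (b.1 0)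

/-- The first fibre power of `B` over `C` is `B`. -/
def fiberPowerZeroIso : B ≅ fiberPower f 0 where
  hom := repHom (B := fiberPower f 0)
    { toFun b := ⟨fun _ => b, fun _ _ => rfl⟩
      map_zero' := rfl
      map_add' _ _ := rfl } fun _ _ => rfl
  inv := repHom (A := fiberPower f 0)
    { toFun b := b.1 0
      map_zero' := rfl
      map_add' _ _ := rfl } fun _ _ => rfl
  hom_inv_id := rep_hom_ext fun _ => rfl
  inv_hom_id := rep_hom_ext fun b => Subtype.ext <| funext fun i =>
    congrArg b.1 (Fin.fin_one_eq_zero i).symm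

lemma fiberPowerZeroIso_hom_comp_base : (fiberPowerZeroIso f).hom ≫ fiberPowerBase f 0 = f := rfl

/-- The Čech nerve of `f`. -/
def cechNerve : SimplicialObject (Rep.{0} ℤ G) where
  obj n := fiberPower f n.unop.len
  map θ := fiberPowerMap f θ.unop.toOrderHom
  map_id _ := rfl
  map_comp _ _ := rfl

/-- The complex of bar complexes of the fibre powers of `f`. -/
def cechBarComplex : ChainComplex (ChainComplex (Rep.{0} ℤ G) ℕ) ℕ :=
  (alternatingFaceMapComplex _).obj
    (((SimplicialObject.whiskering _ _).obj barComplex).obj (cechNerve f))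

lemma cechBarComplex_d (p : ℕ) : (cechBarComplex f).d (p + 1) p =
    ∑ i : Fin (p + 2), (-1 : ℤ) ^ (i : ℕ) • barComplex.map (fiberPowerMap f i.succAbove) :=
  AlternatingFaceMapComplex.obj_d_eq _ p

lemma cechBarComplex_d_f_apply (p q : ℕ) (x : DiffSimplex (fiberPower f (p + 1)) q →₀ ℤ) :
    (((cechBarComplex f).d (p + 1) p).f q).hom x = altFaceSum (fun i : Fin (p + 2) =>
      DiffSimplex.mapRep (fiberPowerMap f i.succAbove)) x := by
  have hd : ((cechBarComplex f).d (p + 1) p).f q = ∑ i : Fin (p + 2), (-1 : ℤ) ^ (i : ℕ) •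
      (barComplex.map (fiberPowerMap f i.succAbove)).f q := by
    refine (congrArg (HomologicalComplex.eval _ _ q).map (cechBarComplex_d f p)).trans ?_
    refine (Functor.map_sum _ _ _).trans (Finset.sum_congr rfl fun i _ => ?_)
    exact Functor.map_zsmul _
  exact (congrArg (fun φ => φ.hom x) hd).trans
    (sum_permRepMap_apply _ (fun i => DiffSimplex.mapRep_smul (fiberPowerMap f i.succAbove)) x)

lemma cechBarComplex_d_comp_base :
    (cechBarComplex f).d 1 0 ≫ barComplex.map (fiberPowerBase f 0) = 0 := by
  have hf : fiberPowerMap f (Fin.succAbove (1 : Fin 2)) ≫ fiberPowerBase f 0 =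
      fiberPowerMap f (Fin.succAbove (0 : Fin 2)) ≫ fiberPowerBase f 0 :=
    rep_hom_ext fun b => b.2 _ _
  refine (congrArg (· ≫ barComplex.map (fiberPowerBase f 0)) (cechBarComplex_d f 0)).trans ?_
  change (∑ i : Fin 2, (-1 : ℤ) ^ (i : ℕ) • barComplex.map (fiberPowerMap f i.succAbove)) ≫
    barComplex.map (fiberPowerBase f 0) = 0
  rw [Fin.sum_univ_two, Preadditive.add_comp]
  simp only [Fin.val_zero, Fin.val_one, pow_zero, pow_one, one_smul, neg_smul,
    Preadditive.neg_comp]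
  rw [← Functor.map_comp, ← Functor.map_comp, hf, add_neg_cancel]

variable {f}

/-- The tuple obtained by inserting `a` in front of the fibre tuple `b`. -/
def fiberCons (a : B) (b : fiberPower f p) (h : f.hom a = f.hom (b.1 0)) :
    fiberPower f (p + 1) :=
  ⟨Fin.cons a b.1, by
    have hcons (i) : f.hom (Fin.cons (α := fun _ => B) a b.1 i) = f.hom (b.1 0) :=
      Fin.cases h (fun i => b.2 i 0) i
    exact fun i j => (hcons i).trans (hcons j).symm⟩

variable (f)

lemma exists_section_diffSimplex_map (hf : Function.Surjective f.hom) (q : ℕ) :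
    ∃ s : DiffSimplex C q → DiffSimplex B q, ∀ c, (s c).mapRep f = c := by
  choose s hs using hf
  refine ⟨fun c => .ofVertices fun j => s (c.diff 0 j), fun c => DiffSimplex.ext ?_⟩
  ext i j
  change f.hom (s (c.diff 0 j) - s (c.diff 0 i)) = _
  rw [map_sub, hs, hs, c.diff_sub_diff]

variable {f} (s : DiffSimplex C q → DiffSimplex B q)
  (hs : ∀ c, (s c).mapRep f = c)

/-- The extra degeneracy of the Čech nerve of `f` in bar degree `q` given by a section `s` of the
map that `f` induces on simplices. -/
def extraDegeneracy (w : DiffSimplex (fiberPower f p) q) :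
    DiffSimplex (fiberPower f (p + 1)) q where
  diff i j := fiberCons
    ((s (w.mapRep (fiberPowerBase f p))).diff i j)
    (w.diff i j) (congrArg (fun c => c.diff i j) (hs _))
  diff_add_diff i j k := by
    refine Subtype.ext (funext fun l => ?_)
    refine Fin.cases ?_ (fun l => ?_) l
    · exact (s _).diff_add_diff i j k
    · exact congrFun (congrArg Subtype.val (w.diff_add_diff i j k)) l

/-- The extra degeneracy in Čech degree `-1`. -/
def extraDegeneracyZero (c : DiffSimplex C q) : DiffSimplex (fiberPower f 0) q :=
  (s c).mapRep (fiberPowerZeroIso f).hom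

lemma altFaceSum_extraDegeneracy_zero (x : DiffSimplex (fiberPower f 0) q →₀ ℤ) :
    altFaceSum (fun i : Fin 2 => DiffSimplex.mapRep (fiberPowerMap f i.succAbove))
        (Finsupp.mapDomain (extraDegeneracy s hs) x) =
      x - Finsupp.mapDomain (extraDegeneracyZero s) (Finsupp.mapDomain
        (DiffSimplex.mapRep (fiberPowerBase f 0)) x) := by
  rw [altFaceSum_extraDegeneracy (s' := extraDegeneracyZero s) (d := fun _ : Fin 1 =>
    DiffSimplex.mapRep (fiberPowerBase f 0))]
  · simp [altFaceSum_apply]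
  · exact fun _ => rfl
  · refine fun i w => DiffSimplex.ext (funext₂ fun a b => Subtype.ext (funext fun l => ?_))
    obtain rfl := Fin.fin_one_eq_zero i
    obtain rfl := Fin.fin_one_eq_zero l
    rfl

lemma altFaceSum_extraDegeneracy_succ (x : DiffSimplex (fiberPower f (p + 1)) q →₀ ℤ) :
    altFaceSum (fun i : Fin (p + 3) => DiffSimplex.mapRep (fiberPowerMap f i.succAbove))
        (Finsupp.mapDomain (extraDegeneracy s hs) x) =
      x - Finsupp.mapDomain (extraDegeneracy s hs) (altFaceSum (fun i : Fin (p + 2) =>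
        DiffSimplex.mapRep (fiberPowerMap f i.succAbove)) x) := by
  refine altFaceSum_extraDegeneracy (fun _ => rfl) (fun k w => ?_) x
  have hbase : (w.mapRep (fiberPowerMap f k.succAbove)).mapRep (fiberPowerBase f p) =
      w.mapRep (fiberPowerBase f (p + 1)) :=
    DiffSimplex.ext (funext₂ fun i j => (w.diff i j).2 _ _)
  refine DiffSimplex.ext (funext₂ fun i j => Subtype.ext (funext fun l => ?_))
  refine Fin.cases ?_ (fun l => ?_) l
  · exact congrArg (fun c => (s c).diff i j) hbase.symm
  · exact congrArg ((extraDegeneracy s hs w).diff i j).1 (Fin.succ_succAbove_succ k l)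

variable (f)

lemma cechBarComplex_exact₀ (hf : Function.Surjective f.hom) :
    (ShortComplex.mk _ _ (cechBarComplex_d_comp_base f)).Exact := by
  refine HomologicalComplex.exact_of_degreewise_exact _ fun q => ?_
  obtain ⟨s, hs⟩ := exists_section_diffSimplex_map f hf q
  rw [rep_exact_iff]
  intro (x : DiffSimplex (fiberPower f 0) q →₀ ℤ) hx
  refine ⟨Finsupp.mapDomain (extraDegeneracy s hs) x, (cechBarComplex_d_f_apply f 0 q _).trans
    ((altFaceSum_extraDegeneracy_zero s hs x).trans ?_)⟩
  exact (congrArg (x - Finsupp.mapDomain (extraDegeneracyZero s) ·) hx).trans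
    ((congrArg (x - ·) Finsupp.mapDomain_zero).trans (sub_zero x))

lemma cechBarComplex_exact (hf : Function.Surjective f.hom) (p : ℕ) :
    (ShortComplex.mk _ _ ((cechBarComplex f).d_comp_d (p + 2) (p + 1) p)).Exact := by
  refine HomologicalComplex.exact_of_degreewise_exact _ fun q => ?_
  obtain ⟨s, hs⟩ := exists_section_diffSimplex_map f hf q
  rw [rep_exact_iff]
  intro (x : DiffSimplex (fiberPower f (p + 1)) q →₀ ℤ) hx
  refine ⟨Finsupp.mapDomain (extraDegeneracy s hs) x, (cechBarComplex_d_f_apply f (p + 1) q _).trans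
    ((altFaceSum_extraDegeneracy_succ s hs x).trans ?_)⟩
  exact (congrArg (x - Finsupp.mapDomain (extraDegeneracy s hs) ·)
    ((cechBarComplex_d_f_apply f p q x).symm.trans hx)).trans
    ((congrArg (x - ·) Finsupp.mapDomain_zero).trans (sub_zero x))

lemma epi_barComplex_map_fiberPowerBase (hf : Function.Surjective f.hom) :
    Epi (barComplex.map (fiberPowerBase f 0)) := by
  refine @HomologicalComplex.epi_of_epi_f _ _ _ _ _ _ _ _ fun q => ?_
  obtain ⟨s, hs⟩ := exists_section_diffSimplex_map f hf q
  rw [Rep.epi_iff_surjective]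
  intro (x : DiffSimplex C q →₀ ℤ)
  refine ⟨Finsupp.mapDomain (extraDegeneracyZero s) x, ?_⟩
  refine Finsupp.mapDomain_comp.symm.trans ?_
  exact (congrArg (Finsupp.mapDomain · x) (funext hs)).trans Finsupp.mapDomain_id

/-- The resolution of the bar complex of `C` by those of the fibre powers of a surjection
`f : B ⟶ C`. -/
def cechResolution (hf : Function.Surjective f.hom) : ComplexResolution (Rep.{0} ℤ G) where
  Z := barComplex.obj C
  X p := barComplex.obj (fiberPower f p)
  d p := (cechBarComplex f).d (p + 1) p
  ε := barComplex.map (fiberPowerBase f 0)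
  epi_ε := epi_barComplex_map_fiberPowerBase f hf
  d_ε := cechBarComplex_d_comp_base f
  d_comp_d _ := (cechBarComplex f).d_comp_d _ _ _
  exact₀ := cechBarComplex_exact₀ f hf
  exact p := cechBarComplex_exact f hf p

end CechNerve

section HomologicallySmall

open Limits

attribute [local instance 10000] Rep.hV2

variable {π : Set ℕ}

/-- The property of `A` used to propagate membership in `𝔠(G, π)` from the homology of `B` to
that of `A ⊞ B`: in the lowest degree in which `B` may fail to have homology in `𝔠(G, π)`, the map
`H_n(B) ⟶ H_n(A ⊞ B)` is an epimorphism modulo `𝔠(G, π)`. -/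
def IsHomologicallySmall (π : Set ℕ) (A : Rep.{0} ℤ G) : Prop :=
  ∀ (B : Rep.{0} ℤ G) (n : ℕ), (∀ m < n, classC G π ((barHomology m).obj B)) →
    (classC G π).epiModSerre ((barHomology n).map (biprod.inr : B ⟶ A ⊞ B))

namespace IsHomologicallySmall

lemma epiModSerre_of_splitting {S : ShortComplex (Rep.{0} ℤ G)}
    (hA : IsHomologicallySmall π S.X₁) (σ : S.Splitting) {n : ℕ}
    (h : ∀ m < n, classC G π ((barHomology m).obj S.X₃)) :
    (classC G π).epiModSerre ((barHomology n).map σ.s) := by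
  have hs : σ.s = biprod.inr ≫ σ.isoBinaryBiproduct.inv := (biprod.inr_desc _ _).symm
  rw [hs, Functor.map_comp]
  exact (classC G π).epiModSerre.comp_mem _ _ (hA _ n h) ((classC G π).epiModSerre_of_epi _)

section FiberPower

variable {S : ShortComplex (Rep.{0} ℤ G)} (hS : S.ShortExact)
  (hA : IsHomologicallySmall π S.X₁) {n : ℕ}

/-- The inclusion of the kernel of `B ⟶ C` as the kernel of the map of fibre powers forgetting
the first coordinate. -/
def fiberPowerKernel (S : ShortComplex (Rep.{0} ℤ G)) (p : ℕ) : S.X₁ ⟶ fiberPower S.g (p + 1) :=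
  repHom (B := fiberPower S.g (p + 1))
    { toFun a := fiberCons (S.f.hom a) 0 ((rep_zero_apply a).trans (map_zero S.g.hom).symm)
      map_zero' := Subtype.ext <| funext <| Fin.cases (map_zero S.f.hom) fun _ => rfl
      map_add' a b := Subtype.ext <| funext <|
        Fin.cases (map_add S.f.hom a b) fun _ => (add_zero (0 : S.X₂)).symm }
    fun g a => Subtype.ext <| funext <|
      Fin.cases (Rep.hom_comm_apply S.f g a) fun _ => (map_zero (S.X₂.ρ g)).symm

include hS in
lemma fiberPowerKernel_exact (p : ℕ) :
    (ShortComplex.mk (fiberPowerKernel S p) (fiberPowerMap S.g Fin.succ) rfl).Exact := by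
  rw [rep_exact_iff]
  intro e he
  have hsucc (i : Fin (p + 1)) : e.1 i.succ = 0 := congrFun (congrArg Subtype.val he) i
  have hzero : S.g.hom (e.1 0) = 0 := by rw [e.2 0 (Fin.succ 0), hsucc, map_zero]
  obtain ⟨a, ha⟩ := ((rep_shortExact_iff S).1 hS).1 _ hzero
  exact ⟨a, Subtype.ext (funext (Fin.cases ha fun i => (hsucc i).symm))⟩

include hS hA

lemma epiModSerre_fiberPowerMap_predAbove (p : ℕ)
    (h : ∀ m < n, classC G π ((barHomology m).obj (fiberPower S.g p))) :
    (classC G π).epiModSerre ((barHomology n).map (fiberPowerMap S.g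
      (Fin.predAbove 0 : Fin (p + 1 + 1) → Fin (p + 1)))) := by
  have hmono : Mono (fiberPowerKernel S p) := (Rep.mono_iff_injective _).2 fun a b hab =>
    ((rep_shortExact_iff S).1 hS).2.1 (congrFun (congrArg Subtype.val hab) 0)
  have hsection : fiberPowerMap S.g (Fin.predAbove 0 : Fin (p + 1 + 1) → Fin (p + 1)) ≫
      fiberPowerMap S.g Fin.succ = 𝟙 _ :=
    rep_hom_ext fun b => Subtype.ext <| funext fun i => congrArg b.1 (Fin.predAbove_zero_succ)
  let σ := ShortComplex.Splitting.ofExactOfSection _ (fiberPowerKernel_exact hS p) _ hsection hmono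
  exact epiModSerre_of_splitting (S := .mk (fiberPowerKernel S p) (fiberPowerMap S.g Fin.succ) rfl)
    hA σ h

lemma classC_barHomology_fiberPower (h : ∀ m < n, classC G π ((barHomology m).obj S.X₂)) (p : ℕ) :
    ∀ m < n, classC G π ((barHomology m).obj (fiberPower S.g p)) := by
  induction p with
  | zero =>
    exact fun m hm => (classC G π).prop_of_iso
      ((barHomology m).mapIso (fiberPowerZeroIso S.g)) (h m hm)
  | succ p ih =>
    exact fun m hm => prop_of_epiModSerre _ (epiModSerre_fiberPowerMap_predAbove hS hA p
      fun k hk => ih k (hk.trans hm)) (ih m hm)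

lemma epiModSerre_barHomology_map (h : ∀ m < n, classC G π ((barHomology m).obj S.X₂)) :
    (classC G π).epiModSerre ((barHomology n).map S.g) := by
  have hf := ((rep_shortExact_iff S).1 hS).2.2
  have hbase : (classC G π).epiModSerre ((barHomology n).map (fiberPowerBase S.g 0)) :=
    (ComplexResolution.epiModSerre_homologyMap_ε (R := cechResolution S.g hf)
      (fun p => classC_barHomology_fiberPower hS hA h p) :)
  rw [← fiberPowerZeroIso_hom_comp_base S.g, Functor.map_comp]
  exact (classC G π).epiModSerre.comp_mem _ _ ((classC G π).epiModSerre_of_epi _) hbase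

omit hS hA in
lemma barHomology_map_diagonal_comp_d {B C : Rep.{0} ℤ G} (f : B ⟶ C) (n : ℕ) :
    (barHomology n).map (fiberPowerMap f (Fin.predAbove 0 : Fin 2 → Fin 1)) ≫
      HomologicalComplex.homologyMap ((cechBarComplex f).d 1 0) n = 0 := by
  have hfaces : fiberPowerMap f (Fin.predAbove 0 : Fin 2 → Fin 1) ≫
      fiberPowerMap f (Fin.succAbove (0 : Fin 2)) =
      fiberPowerMap f (Fin.predAbove 0 : Fin 2 → Fin 1) ≫
      fiberPowerMap f (Fin.succAbove (1 : Fin 2)) :=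
    rep_hom_ext fun b => Subtype.ext <| funext fun i => congrArg b.1
      ((Fin.fin_one_eq_zero _).trans (Fin.fin_one_eq_zero _).symm)
  have hd : barComplex.map (fiberPowerMap f (Fin.predAbove 0 : Fin 2 → Fin 1)) ≫
      (cechBarComplex f).d 1 0 = 0 := by
    refine (congrArg (barComplex.map _ ≫ ·) (cechBarComplex_d f 0)).trans ?_
    change barComplex.map _ ≫
      (∑ i : Fin 2, (-1 : ℤ) ^ (i : ℕ) • barComplex.map (fiberPowerMap f i.succAbove)) = 0
    rw [Fin.sum_univ_two, Preadditive.comp_add]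
    simp only [Fin.val_zero, Fin.val_one, pow_zero, pow_one, one_smul, neg_smul,
      Preadditive.comp_neg]
    rw [← Functor.map_comp, ← Functor.map_comp, hfaces, add_neg_cancel]
  refine (HomologicalComplex.homologyMap_comp (barComplex.map _) _ n).symm.trans ?_
  exact (congrArg (HomologicalComplex.homologyMap · n) hd).trans
    (HomologicalComplex.homologyMap_zero _ _ _)

lemma monoModSerre_barHomology_map (h : ∀ m < n, classC G π ((barHomology m).obj S.X₂)) :
    (classC G π).monoModSerre ((barHomology n).map S.g) := by
  have hf := ((rep_shortExact_iff S).1 hS).2.2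
  have hfiber := classC_barHomology_fiberPower hS hA h
  have hbase : (classC G π).monoModSerre ((barHomology n).map (fiberPowerBase S.g 0)) :=
    (ComplexResolution.monoModSerre_homologyMap_ε (R := cechResolution S.g hf)
      (fun p => hfiber p) (epiModSerre_fiberPowerMap_predAbove hS hA 0 (hfiber 0))
      (barHomology_map_diagonal_comp_d S.g n) :)
  rw [← fiberPowerZeroIso_hom_comp_base S.g, Functor.map_comp]
  exact (classC G π).monoModSerre.comp_mem _ _ ((classC G π).monoModSerre_of_mono _) hbase

end FiberPower

lemma classC_barHomology_biprod {A B : Rep.{0} ℤ G} (hA : IsHomologicallySmall π A) {n : ℕ}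
    (h : ∀ m < n, classC G π ((barHomology m).obj B)) :
    ∀ m < n, classC G π ((barHomology m).obj (A ⊞ B)) := fun m hm =>
  prop_of_epiModSerre _ (hA B m fun k hk => h k (hk.trans hm)) (h m hm)

lemma shortExact_biprod {C : Type*} [Category* C] [Abelian C] {S : ShortComplex C}
    (hS : S.ShortExact) (B : C) :
    (ShortComplex.mk (S.f ≫ (biprod.inl : S.X₂ ⟶ S.X₂ ⊞ B)) (biprod.map S.g (𝟙 B))
      (by simp)).ShortExact := by
  have := hS.mono_f
  have := hS.epi_g
  refine { exact := ShortComplex.exact_of_f_is_kernel _ (KernelFork.IsLimit.ofι' _ _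
    fun k hk => ⟨hS.exact.lift (k ≫ biprod.fst) ?_, ?_⟩) }
  · simpa using congrArg (· ≫ biprod.fst) hk
  · have hk₂ : k ≫ biprod.snd = 0 := by simpa using congrArg (· ≫ biprod.snd) hk
    refine biprod.hom_ext _ _ ?_ ?_
    · simp
    · simp [hk₂]

variable {S : ShortComplex (Rep.{0} ℤ G)}

lemma of_shortExact_of_left_of_middle (hS : S.ShortExact) (h₁ : IsHomologicallySmall π S.X₁)
    (h₂ : IsHomologicallySmall π S.X₂) : IsHomologicallySmall π S.X₃ := by
  intro B n hB
  have hinr : (biprod.inr : B ⟶ S.X₃ ⊞ B) = biprod.inr ≫ biprod.map S.g (𝟙 B) := by simp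
  rw [hinr, Functor.map_comp]
  exact (classC G π).epiModSerre.comp_mem _ _ (h₂ B n hB)
    (epiModSerre_barHomology_map (shortExact_biprod hS B) h₁ (classC_barHomology_biprod h₂ hB))

lemma of_shortExact_of_left_of_right (hS : S.ShortExact) (h₁ : IsHomologicallySmall π S.X₁)
    (h₃ : IsHomologicallySmall π S.X₃) : IsHomologicallySmall π S.X₂ := by
  intro B n
  induction n using Nat.strong_induction_on with
  | _ n ih =>
  intro hB
  have hS₂B : ∀ m < n, classC G π ((barHomology m).obj (S.X₂ ⊞ B)) := fun m hm =>
    prop_of_epiModSerre _ (ih m hm fun k hk => hB k (hk.trans hm)) (hB m hm)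
  have hinr : (biprod.inr : B ⟶ S.X₃ ⊞ B) = biprod.inr ≫ biprod.map S.g (𝟙 B) := by simp
  have hepi := h₃ B n hB
  rw [hinr, Functor.map_comp] at hepi
  exact epiModSerre_of_comp_monoModSerre _ hepi
    (monoModSerre_barHomology_map (shortExact_biprod hS B) h₁ hS₂B)

lemma of_memC (hnice : ∀ A : Rep.{0} ℤ G, NiceRep π A → IsHomologicallySmall π A)
    {A : Rep.{0} ℤ G} (hA : MemC G π A) : IsHomologicallySmall π A :=
  MemC.induction_of_mono hnice (fun _ => of_shortExact_of_left_of_middle)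
    (fun _ => of_shortExact_of_left_of_right) hA (𝟙 A) inferInstance

lemma classC_homology (K : ChainComplex (Rep.{0} ℤ G) ℕ) {n : ℕ} (h : classC G π (K.X n)) :
    classC G π (K.homology n) :=
  (classC G π).prop_of_epi (K.homologyπ n) ((classC G π).prop_of_mono (K.iCycles n) h)

lemma classC_barHomology_of_subsingleton (B : Rep.{0} ℤ G) [Subsingleton B] (n : ℕ) :
    classC G π ((barHomology n).obj B) := by
  have : Subsingleton (DiffSimplex B n) :=
    ⟨fun a b => DiffSimplex.ext (funext₂ fun _ _ => Subsingleton.elim _ _)⟩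
  exact classC_homology (barComplex.obj B) (MemC.of_nice (permRep (DiffSimplex B n))
    (niceRep_iff.2 (IsNice.of_fg (M := DiffSimplex B n →₀ ℤ))))

lemma classC_barHomology {A : Rep.{0} ℤ G} (hA : IsHomologicallySmall π A) (n : ℕ) :
    classC G π ((barHomology n).obj A) :=
  (classC G π).prop_of_epi ((barHomology n).map (biprod.fst : A ⊞ Rep.trivial ℤ G PUnit ⟶ A))
    (classC_barHomology_biprod hA (n := n + 1)
      (fun m _ => classC_barHomology_of_subsingleton _ m) n n.lt_succ_self)

end IsHomologicallySmall

end HomologicallySmall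

section TupleChain

/-- The group of chains on tuples of elements of `E`. With `Fin n → E` in degree `n`, these form
the augmented chain complex of the simplex with vertex set `E`, shifted by one; it is the
universal cover of the classifying space of `E`. -/
abbrev TupleChain (E : Type) (n : ℕ) : Type := (Fin n → E) →₀ ℤ

namespace TupleChain

variable {E M : Type} [AddCommGroup M] {n : ℕ}

/-- The boundary of a chain of tuples. -/
def boundary (E : Type) (n : ℕ) : TupleChain E (n + 1) →+ TupleChain E n :=
  altFaceSum fun i : Fin (n + 1) => i.removeNth

/-- The map on chains of tuples induced by a map of vertices. -/
def map (f : E → E) : TupleChain E n →+ TupleChain E n :=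
  Finsupp.mapDomain.addMonoidHom (f ∘ ·)

/-- The cone over a chain of tuples, with apex `v`. -/
def cone (v : E) : TupleChain E n →+ TupleChain E (n + 1) :=
  Finsupp.mapDomain.addMonoidHom fun w => Fin.cons (α := fun _ => E) v w

/-- The homomorphism defined on chains of positive degree by its values on cones. -/
def liftCone (F : E → TupleChain E n →+ M) : TupleChain E (n + 1) →+ M :=
  Finsupp.liftAddHom fun v => (F (v 0)).comp (Finsupp.singleAddHom (Fin.tail v))

lemma cone_single (v : E) (w : Fin n → E) (k : ℤ) :
    cone v (Finsupp.single w k) = Finsupp.single (Fin.cons v w : Fin (n + 1) → E) k :=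
  Finsupp.mapDomain_single

lemma hom_ext_cone {f g : TupleChain E (n + 1) →+ M} (h : ∀ v, f.comp (cone v) = g.comp (cone v)) :
    f = g := by
  refine Finsupp.addHom_ext fun v k => ?_
  rw [← Fin.cons_self_tail v, ← cone_single, ← AddMonoidHom.comp_apply, h,
    AddMonoidHom.comp_apply]

lemma liftCone_cone (F : E → TupleChain E n →+ M) (v : E) (x : TupleChain E n) :
    liftCone F (cone v x) = F v x := by
  suffices (liftCone F).comp (cone v) = F v from DFunLike.congr_fun this x
  refine Finsupp.addHom_ext fun w k => ?_
  rw [AddMonoidHom.comp_apply, cone_single]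
  simp [liftCone]

lemma boundary_map (f : E → E) (x : TupleChain E (n + 1)) :
    boundary E n (map f x) = map f (boundary E n x) := by
  have hface (i : Fin (n + 1)) (v : Fin (n + 1) → E) :
      i.removeNth (f ∘ v) = f ∘ i.removeNth v := rfl
  exact altFaceSum_mapDomain hface x

lemma map_zero_degree (f : E → E) (x : TupleChain E 0) : map f x = x := by
  refine Eq.trans ?_ Finsupp.mapDomain_id
  exact congrArg (Finsupp.mapDomain · x) (funext fun _ => Subsingleton.elim _ _)

lemma map_map (f g : E → E) (x : TupleChain E n) : map f (map g x) = map (f ∘ g) x :=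
  Finsupp.mapDomain_comp.symm

lemma map_cone (f : E → E) (v : E) (x : TupleChain E n) :
    map f (cone v x) = cone (f v) (map f x) := by
  refine Finsupp.mapDomain_comp.symm.trans (Eq.trans ?_ Finsupp.mapDomain_comp)
  exact congrArg (Finsupp.mapDomain · x) (funext fun w => Fin.comp_cons f v w)

lemma boundary_cone (v : E) (x : TupleChain E (n + 1)) :
    boundary E (n + 1) (cone v x) = x - cone v (boundary E n x) :=
  altFaceSum_extraDegeneracy (fun w => Fin.removeNth_zero _) (fun i w => by
    funext k
    cases k using Fin.cases <;> simp [Fin.removeNth]) x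

lemma boundary_cone_zero (v : E) (x : TupleChain E 0) : boundary E 0 (cone v x) = x := by
  refine (altFaceSum_apply _ _).trans ?_
  rw [Fin.sum_univ_one, Fin.val_zero, pow_zero, one_smul]
  refine Finsupp.mapDomain_comp.symm.trans (Eq.trans ?_ Finsupp.mapDomain_id)
  exact congrArg (Finsupp.mapDomain · x) (funext fun _ => Subsingleton.elim _ _)

lemma boundary_boundary (x : TupleChain E (n + 2)) :
    boundary E n (boundary E (n + 1) x) = 0 := by
  induction n with
  | zero =>
    suffices (boundary E 0).comp (boundary E 1) = 0 from DFunLike.congr_fun this x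
    refine hom_ext_cone fun v => AddMonoidHom.ext fun x => ?_
    change boundary E 0 (boundary E 1 (cone v x)) = 0
    rw [boundary_cone, map_sub, boundary_cone_zero, sub_self]
  | succ n ih =>
    suffices (boundary E (n + 1)).comp (boundary E (n + 2)) = 0 from DFunLike.congr_fun this x
    refine hom_ext_cone fun v => AddMonoidHom.ext fun x => ?_
    change boundary E (n + 1) (boundary E (n + 2) (cone v x)) = 0
    rw [boundary_cone, map_sub, boundary_cone, ih, map_zero, sub_zero, sub_self]

section NullHomotopy

variable (φ : ∀ n, TupleChain E n →+ TupleChain E n)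

/-- The null-homotopy of an endomorphism `φ` of the complex of tuples vanishing in degree `0`
which is obtained by taking the cone, at the first vertex of each tuple, over the cycle which the
homotopy formula requires to be a boundary. -/
def coneHomotopy : ∀ n, TupleChain E n →+ TupleChain E (n + 1)
  | 0 => 0
  | n + 1 => liftCone fun v =>
      (cone v).comp ((φ (n + 1) - (coneHomotopy n).comp (boundary E n)).comp (cone v))

lemma coneHomotopy_cone (v : E) (x : TupleChain E n) :
    coneHomotopy φ (n + 1) (cone v x) =
      cone v (φ (n + 1) (cone v x) - coneHomotopy φ n (boundary E n (cone v x))) :=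
  liftCone_cone _ v x

variable {φ}

lemma boundary_coneHomotopy_add (hφ₀ : φ 0 = 0)
    (hφ : ∀ n x, boundary E n (φ (n + 1) x) = φ n (boundary E n x)) (x : TupleChain E (n + 1)) :
    boundary E (n + 1) (coneHomotopy φ (n + 1) x) + coneHomotopy φ n (boundary E n x) =
      φ (n + 1) x := by
  have homotopy_of_cycle {n : ℕ}
      (hcycle : ∀ x, boundary E n (φ (n + 1) x - coneHomotopy φ n (boundary E n x)) = 0)
      (x : TupleChain E (n + 1)) :
      boundary E (n + 1) (coneHomotopy φ (n + 1) x) + coneHomotopy φ n (boundary E n x) =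
        φ (n + 1) x := by
    suffices (boundary E (n + 1)).comp (coneHomotopy φ (n + 1)) +
        (coneHomotopy φ n).comp (boundary E n) = φ (n + 1) from DFunLike.congr_fun this x
    refine hom_ext_cone fun v => AddMonoidHom.ext fun x => ?_
    change boundary E (n + 1) (coneHomotopy φ (n + 1) (cone v x)) +
      coneHomotopy φ n (boundary E n (cone v x)) = φ (n + 1) (cone v x)
    rw [coneHomotopy_cone, boundary_cone, hcycle, map_zero, sub_zero, sub_add_cancel]
  induction n with
  | zero => exact homotopy_of_cycle (fun x => by simp [hφ, hφ₀, coneHomotopy]) x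
  | succ n ih =>
    refine homotopy_of_cycle (fun x => ?_) x
    have hboundary := ih (boundary E (n + 1) x)
    rw [boundary_boundary, map_zero, add_zero] at hboundary
    rw [map_sub, hφ, hboundary, sub_self]

lemma coneHomotopy_map {f : E → E} (hf : ∀ n x, φ n (map f x) = map f (φ n x))
    (x : TupleChain E n) : coneHomotopy φ n (map f x) = map f (coneHomotopy φ n x) := by
  induction n with
  | zero => exact (map_zero (map f)).symm
  | succ n ih =>
    suffices (coneHomotopy φ (n + 1)).comp (map f) = (map f).comp (coneHomotopy φ (n + 1)) from
      DFunLike.congr_fun this x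
    refine hom_ext_cone fun v => AddMonoidHom.ext fun x => ?_
    change coneHomotopy φ (n + 1) (map f (cone v x)) = map f (coneHomotopy φ (n + 1) (cone v x))
    rw [map_cone, coneHomotopy_cone,
      ← map_cone, hf, boundary_map, ih, ← map_sub, coneHomotopy_cone, map_cone]

end NullHomotopy

/-- The homomorphism sending a tuple `v` to the value on its tail of a homomorphism which depends
on the first edge of `v`. -/
def edgeLift (F : E → E → TupleChain E (n + 1) →+ M) : TupleChain E (n + 2) →+ M :=
  liftCone fun v => liftCone fun w => (F v w).comp (cone w)

lemma edgeLift_cone_cone (F : E → E → TupleChain E (n + 1) →+ M) (v w : E) (x : TupleChain E n) :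
    edgeLift F (cone v (cone w x)) = F v w (cone w x) := by
  rw [edgeLift, liftCone_cone, liftCone_cone, AddMonoidHom.comp_apply]

lemma edgeLift_boundary {F : E → E → TupleChain E (n + 1) →+ M}
    (hF : ∀ u v w, F u v + F v w = F u w) (u v : E) (x : TupleChain E (n + 1)) :
    edgeLift F (boundary E (n + 2) (cone u (cone v x))) =
      -F u v (boundary E (n + 1) (cone v x)) := by
  suffices ((edgeLift F).comp (boundary E (n + 2))).comp ((cone u).comp (cone v)) =
      -(F u v).comp ((boundary E (n + 1)).comp (cone v)) from DFunLike.congr_fun this x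
  refine hom_ext_cone fun w => AddMonoidHom.ext fun x => ?_
  change edgeLift F (boundary E (n + 2) (cone u (cone v (cone w x)))) =
    -F u v (boundary E (n + 1) (cone v (cone w x)))
  rw [boundary_cone, boundary_cone, map_sub, map_sub, map_sub, edgeLift_cone_cone,
    edgeLift_cone_cone, edgeLift_cone_cone, map_sub (F u v), ← hF u v w, AddMonoidHom.add_apply]
  abel

end TupleChain

end TupleChain

section Quotient

namespace TupleChain

variable {E E' M : Type} [AddCommGroup E] [AddCommGroup E'] [AddCommGroup M] {n : ℕ}

/-- The quotient map from the chains of tuples to the chains on the classifying space. -/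
def toBar : TupleChain E (n + 1) →+ (DiffSimplex E n →₀ ℤ) :=
  Finsupp.mapDomain.addMonoidHom DiffSimplex.ofVertices

lemma toBar_single (v : Fin (n + 1) → E) (k : ℤ) :
    toBar (Finsupp.single v k) = Finsupp.single (DiffSimplex.ofVertices v) k :=
  Finsupp.mapDomain_single

lemma ofVertices_diff (c : DiffSimplex E n) : DiffSimplex.ofVertices (c.diff 0) = c :=
  DiffSimplex.ext (funext₂ fun i j => c.diff_sub_diff 0 i j)

lemma toBar_surjective : Function.Surjective (toBar (E := E) (n := n)) :=
  Finsupp.mapDomain_surjective fun c => ⟨c.diff 0, ofVertices_diff c⟩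

lemma toBar_map_add (u : E) (x : TupleChain E (n + 1)) : toBar (map (· + u) x) = toBar x := by
  refine Finsupp.mapDomain_comp.symm.trans ?_
  exact congrArg (Finsupp.mapDomain · x)
    (funext fun v => DiffSimplex.ext (funext₂ fun i j => add_sub_add_right_eq_sub _ _ _))

lemma toBar_map (f : E →+ E) (x : TupleChain E (n + 1)) :
    toBar (map f x) = Finsupp.mapDomain (DiffSimplex.map f) (toBar x) := by
  refine Finsupp.mapDomain_comp.symm.trans (Eq.trans ?_ Finsupp.mapDomain_comp)
  exact congrArg (Finsupp.mapDomain · x)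
    (funext fun v => DiffSimplex.ext (funext₂ fun i j => (map_sub f _ _).symm))

lemma barBoundary_toBar (x : TupleChain E (n + 2)) :
    barBoundary E n (toBar x) = toBar (boundary E (n + 1) x) := by
  have hface (i : Fin (n + 2)) (v : Fin (n + 2) → E) :
      (DiffSimplex.ofVertices v).reindex i.succAbove =
        DiffSimplex.ofVertices (i.removeNth v) := rfl
  exact altFaceSum_mapDomain hface x

/-- The homomorphism from the chains on the classifying space induced by a translation invariant
homomorphism from the chains of tuples. -/
def descend (φ : TupleChain E (n + 1) →+ M) : (DiffSimplex E n →₀ ℤ) →+ M :=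
  Finsupp.liftAddHom fun c => φ.comp (Finsupp.singleAddHom (c.diff 0))

lemma descend_toBar {φ : TupleChain E (n + 1) →+ M} (hφ : ∀ u x, φ (map (· + u) x) = φ x)
    (x : TupleChain E (n + 1)) : descend φ (toBar x) = φ x := by
  induction x using Finsupp.induction_linear with
  | zero => simp only [map_zero]
  | add x y hx hy => simp only [map_add, hx, hy]
  | single v k =>
    rw [toBar_single, descend, Finsupp.liftAddHom_apply_single, AddMonoidHom.comp_apply,
      Finsupp.singleAddHom_apply, ← hφ (v 0)]
    refine congrArg φ (Finsupp.mapDomain_single.trans (congrArg (Finsupp.single · k) ?_))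
    exact funext fun i => sub_add_cancel _ _

end TupleChain

end Quotient

section RankOne

namespace TupleChain

variable {E : Type} [AddCommGroup E] {n : ℕ}

lemma map_add_map_add (u v : E) (x : TupleChain E n) :
    map (· + u) (map (· + v) x) = map (· + (v + u)) x := by
  rw [map_map]
  exact congrArg (map · x) (funext fun w => add_assoc w v u)

/-- Translation by `e`, minus the identity. -/
def translateSub (e : E) (n : ℕ) : TupleChain E n →+ TupleChain E n :=
  map (· + e) - AddMonoidHom.id _

/-- The null-homotopy of the difference of the translation by `e` and the identity. -/
def prism (e : E) (n : ℕ) : TupleChain E n →+ TupleChain E (n + 1) :=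
  coneHomotopy (translateSub e) n

lemma boundary_prism (e : E) (x : TupleChain E (n + 1)) :
    boundary E (n + 1) (prism e (n + 1) x) =
      map (· + e) x - x - prism e n (boundary E n x) := by
  refine eq_sub_of_add_eq (boundary_coneHomotopy_add ?_ (fun n x => ?_) x)
  · exact AddMonoidHom.ext fun x => sub_eq_zero.2 (map_zero_degree _ x)
  · exact (map_sub _ _ _).trans (congrArg (· - _) (boundary_map _ x))

lemma prism_map_add (e u : E) (x : TupleChain E n) :
    prism e n (map (· + u) x) = map (· + u) (prism e n x) := by
  refine coneHomotopy_map (fun n x => ?_) x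
  change map (· + e) (map (· + u) x) - map (· + u) x = map (· + u) (map (· + e) x - x)
  rw [map_sub, map_add_map_add, map_add_map_add, add_comm]

/-- The sum of the translations by `j • e` for `0 ≤ j < k`, continued to all integers `k` by the
rule `translateSum_add_one`. -/
def translateSum (e : E) (k : ℤ) : TupleChain E n →+ TupleChain E n :=
  ∑ j ∈ Finset.Ico 0 k, map (· + j • e) - ∑ j ∈ Finset.Ico k 0, map (· + j • e)

lemma translateSum_add_one (e : E) (k : ℤ) :
    translateSum (n := n) e (k + 1) = translateSum e k + map (· + k • e) := by
  rcases le_or_gt 0 k with hk | hk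
  · have hinsert : Finset.Ico 0 (k + 1) = insert k (Finset.Ico 0 k) := by ext; simp; omega
    rw [translateSum, translateSum, hinsert, Finset.sum_insert (by simp),
      Finset.Ico_eq_empty_of_le hk, Finset.Ico_eq_empty_of_le (hk.trans (by omega))]
    abel
  · have hinsert : Finset.Ico k 0 = insert k (Finset.Ico (k + 1) 0) := by ext; simp; omega
    rw [translateSum, translateSum, hinsert, Finset.sum_insert (by simp),
      Finset.Ico_eq_empty_of_le hk.le, Finset.Ico_eq_empty_of_le (Int.add_one_le_of_lt hk)]
    abel

/-- The sum of the translations by `j • e` for `k ≤ j < l`. -/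
def translateSumBetween (e : E) (k l : ℤ) : TupleChain E n →+ TupleChain E n :=
  translateSum e l - translateSum e k

lemma translateSumBetween_add (e : E) (k l m : ℤ) :
    translateSumBetween (n := n) e k l + translateSumBetween e l m =
      translateSumBetween e k m := by
  rw [translateSumBetween, translateSumBetween, translateSumBetween]
  abel

lemma map_translateSumBetween {M : Type} [AddCommGroup M] (φ : TupleChain E n →+ M) {g : ℤ → M}
    {e : E} {x : TupleChain E n} (h : ∀ j : ℤ, φ (map (· + j • e) x) = g (j + 1) - g j)
    (k l : ℤ) : φ (translateSumBetween e k l x) = g l - g k := by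
  have hperiodic : Function.Periodic (fun j => φ (translateSum e j x) - g j) 1 := fun j => by
    beta_reduce
    rw [translateSum_add_one, AddMonoidHom.add_apply, map_add, h]
    abel
  have hconst (j : ℤ) : φ (translateSum e j x) - g j = φ (translateSum e 0 x) - g 0 := by
    simpa using hperiodic.int_mul_eq j
  rw [translateSumBetween, AddMonoidHom.sub_apply, map_sub, ← sub_eq_zero, sub_sub_sub_comm,
    hconst l, hconst k, sub_self]

lemma translateSumBetween_map_add (e u : E) (k l : ℤ) (x : TupleChain E n) :
    translateSumBetween e k l (map (· + u) x) = map (· + u) (translateSumBetween e k l x) := by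
  refine (map_translateSumBetween _ (g := fun j => translateSum e j (map (· + u) x))
    (fun j => ?_) k l).symm
  rw [translateSum_add_one, AddMonoidHom.add_apply, add_sub_cancel_left, map_add_map_add,
    map_add_map_add, add_comm]

lemma translateSumBetween_add_add (e : E) (k l m : ℤ) (x : TupleChain E n) :
    translateSumBetween e (k + m) (l + m) x =
      map (· + m • e) (translateSumBetween e k l x) := by
  refine (map_translateSumBetween _ (g := fun j => translateSum e (j + m) x)
    (fun j => ?_) k l).symm
  rw [add_right_comm, translateSum_add_one, AddMonoidHom.add_apply, add_sub_cancel_left,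
    map_add_map_add, ← add_smul]

section Projection

variable (a : E →+ ℤ) (e : E)

/-- The endomorphism `v ↦ v - a v • e`, the projection to the kernel of `a` along `e` if
`a e = 1`. -/
def projAlong : E →+ E :=
  AddMonoidHom.id E - (zmultiplesHom E e).comp a

lemma projAlong_apply (v : E) : projAlong a e v = v - a v • e := by
  simp [projAlong]

/-- The map of the tuples which shifts the projections of the vertices by `a v • e`, where `v` is
the first vertex. -/
def straighten (n : ℕ) : TupleChain E (n + 1) →+ TupleChain E (n + 1) :=
  liftCone fun v => (map (projAlong a e · + a v • e)).comp (cone v)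

/-- The chain which fills the gap between the projections of a simplex shifted by `a v • e` and
`a w • e`. -/
def fillGap (v w : E) (n : ℕ) : TupleChain E n →+ TupleChain E (n + 1) :=
  (prism e n).comp ((translateSumBetween e (a v) (a w)).comp (map (projAlong a e)))

/-- The correction which makes `straighten` a chain map. -/
def correction : ∀ n, TupleChain E (n + 1) →+ TupleChain E (n + 1)
  | 0 => 0
  | n + 1 => edgeLift fun v w => fillGap a e v w (n + 1)

/-- An equivariant chain map inducing the projection plus the product of `e` with the projected
cap product. -/
def projLift : ∀ n, TupleChain E n →+ TupleChain E n
  | 0 => AddMonoidHom.id _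
  | n + 1 => straighten a e n + correction a e n

variable {a e}

lemma straighten_cone (v : E) (x : TupleChain E n) :
    straighten a e n (cone v x) = map (projAlong a e · + a v • e) (cone v x) :=
  liftCone_cone _ v x

lemma map_add_map_projAlong (u : E) (x : TupleChain E n) :
    map (· + u) (map (projAlong a e) x) = map (projAlong a e · + u) x :=
  map_map _ _ x

lemma map_projAlong_map_add (u : E) (x : TupleChain E n) :
    map (projAlong a e) (map (· + u) x) =
      map (· + projAlong a e u) (map (projAlong a e) x) := by
  rw [map_map, map_map]
  exact congrArg (map · x) (funext fun w => map_add _ w u)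

lemma boundary_straighten (v : E) (x : TupleChain E (n + 1)) :
    boundary E (n + 1) (straighten a e (n + 1) (cone v x)) =
      straighten a e n (boundary E (n + 1) (cone v x)) +
        (map (projAlong a e · + a v • e) x - straighten a e n x) := by
  rw [straighten_cone, boundary_map, boundary_cone, map_sub, map_sub, straighten_cone]
  abel

lemma boundary_fillGap (v w : E) (x : TupleChain E (n + 1)) :
    boundary E (n + 1) (fillGap a e v w (n + 1) x) =
      map (projAlong a e · + a w • e) x - map (projAlong a e · + a v • e) x -
        fillGap a e v w n (boundary E n x) := by
  set y := map (projAlong a e) x with hy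
  have hboundary : boundary E n (translateSumBetween e (a v) (a w) y) =
      translateSumBetween e (a v) (a w) (map (projAlong a e) (boundary E n x)) := by
    refine (map_translateSumBetween _ (g := fun j => translateSum e j (boundary E n y))
      (fun j => ?_) _ _).trans ?_
    · rw [boundary_map, translateSum_add_one, AddMonoidHom.add_apply, add_sub_cancel_left]
    · rw [hy, boundary_map, translateSumBetween, AddMonoidHom.sub_apply]
  have htelescope : translateSub e (n + 1) (translateSumBetween e (a v) (a w) y) =
      map (projAlong a e · + a w • e) x - map (projAlong a e · + a v • e) x := by
    rw [← map_add_map_projAlong, ← map_add_map_projAlong, ← hy]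
    refine map_translateSumBetween _ (g := fun j => map (· + j • e) y) (fun j => ?_) _ _
    change map (· + e) (map (· + j • e) y) - map (· + j • e) y = _
    rw [map_add_map_add, add_smul, one_smul]
  rw [fillGap, AddMonoidHom.comp_apply, AddMonoidHom.comp_apply, boundary_prism, ← hy,
    hboundary, ← htelescope]
  rfl

lemma boundary_correction (v : E) (x : TupleChain E (n + 1)) :
    boundary E (n + 1) (correction a e (n + 1) (cone v x)) =
      correction a e n (boundary E (n + 1) (cone v x)) +
        (straighten a e n x - map (projAlong a e · + a v • e) x) := by
  suffices (boundary E (n + 1)).comp ((correction a e (n + 1)).comp (cone v)) =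
      (correction a e n).comp ((boundary E (n + 1)).comp (cone v)) +
        (straighten a e n - map (projAlong a e · + a v • e)) from DFunLike.congr_fun this x
  refine hom_ext_cone fun w => AddMonoidHom.ext fun x => ?_
  have hgap : correction a e n (boundary E (n + 1) (cone v (cone w x))) =
      -fillGap a e v w n (boundary E n (cone w x)) := by
    cases n with
    | zero => exact neg_zero.symm
    | succ n =>
      refine (edgeLift_boundary (fun u v w => ?_) v w x)
      rw [fillGap, fillGap, fillGap, ← AddMonoidHom.comp_add, ← AddMonoidHom.add_comp,
        translateSumBetween_add]
  change boundary E (n + 1) (correction a e (n + 1) (cone v (cone w x))) =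
    correction a e n (boundary E (n + 1) (cone v (cone w x))) +
      (straighten a e n (cone w x) - map (projAlong a e · + a v • e) (cone w x))
  rw [correction, edgeLift_cone_cone, boundary_fillGap, hgap, straighten_cone]
  abel

lemma boundary_projLift (x : TupleChain E (n + 1)) :
    boundary E n (projLift a e (n + 1) x) = projLift a e n (boundary E n x) := by
  suffices (boundary E n).comp (projLift a e (n + 1)) =
      (projLift a e n).comp (boundary E n) from DFunLike.congr_fun this x
  refine hom_ext_cone fun v => AddMonoidHom.ext fun x => ?_
  change boundary E n (straighten a e n (cone v x) + correction a e n (cone v x)) =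
    projLift a e n (boundary E n (cone v x))
  cases n with
  | zero =>
    rw [straighten_cone, map_add, boundary_map, map_zero_degree, correction,
      AddMonoidHom.zero_apply, map_zero, add_zero]
    rfl
  | succ n =>
    rw [map_add, boundary_straighten, boundary_correction]
    change _ = straighten a e n (boundary E (n + 1) (cone v x)) +
      correction a e n (boundary E (n + 1) (cone v x))
    abel

lemma straighten_map_add (u : E) (x : TupleChain E (n + 1)) :
    straighten a e n (map (· + u) x) = map (· + u) (straighten a e n x) := by
  suffices (straighten a e n).comp (map (· + u)) = (map (· + u)).comp (straighten a e n) from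
    DFunLike.congr_fun this x
  refine hom_ext_cone fun v => AddMonoidHom.ext fun x => ?_
  change straighten a e n (map (· + u) (cone v x)) = map (· + u) (straighten a e n (cone v x))
  rw [map_cone, straighten_cone, straighten_cone, ← map_cone (· + u), map_map, map_map]
  refine congrArg (map · (cone v x)) (funext fun w => ?_)
  simp only [Function.comp_apply, projAlong_apply, map_add, add_smul]
  abel

lemma fillGap_map_add (u v w : E) (x : TupleChain E n) :
    fillGap a e (v + u) (w + u) n (map (· + u) x) = map (· + u) (fillGap a e v w n x) := by
  simp only [fillGap, AddMonoidHom.comp_apply]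
  rw [map_projAlong_map_add, translateSumBetween_map_add, map_add a, map_add a,
    translateSumBetween_add_add, map_add_map_add, projAlong_apply, add_sub_cancel,
    prism_map_add]

lemma correction_map_add (u : E) (x : TupleChain E (n + 1)) :
    correction a e n (map (· + u) x) = map (· + u) (correction a e n x) := by
  cases n with
  | zero => exact (map_zero (map (· + u))).symm
  | succ n =>
    suffices (correction a e (n + 1)).comp (map (· + u)) =
        (map (· + u)).comp (correction a e (n + 1)) from DFunLike.congr_fun this x
    refine hom_ext_cone fun v => hom_ext_cone fun w => AddMonoidHom.ext fun x => ?_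
    change correction a e (n + 1) (map (· + u) (cone v (cone w x))) =
      map (· + u) (correction a e (n + 1) (cone v (cone w x)))
    rw [map_cone, map_cone, correction, edgeLift_cone_cone, edgeLift_cone_cone,
      ← map_cone (· + u),
      fillGap_map_add]

lemma projLift_map_add (u : E) (x : TupleChain E n) :
    projLift a e n (map (· + u) x) = map (· + u) (projLift a e n x) := by
  cases n with
  | zero => rfl
  | succ n =>
    change straighten a e n (map (· + u) x) + correction a e n (map (· + u) x) =
      map (· + u) (straighten a e n x + correction a e n x)
    rw [straighten_map_add, correction_map_add, map_add]

end Projection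

end TupleChain

end RankOne

section CapProduct

variable {E E' A B : Type} [AddCommGroup E] [AddCommGroup E'] [AddCommGroup A] [AddCommGroup B]
  {n : ℕ}

lemma barBoundary_mapDomain (f : E →+ E') (x : DiffSimplex E (n + 1) →₀ A) :
    barBoundary E' n (Finsupp.mapDomain (DiffSimplex.map f) x) =
      Finsupp.mapDomain (DiffSimplex.map f) (barBoundary E n x) := by
  have hface (i : Fin (n + 2)) (c : DiffSimplex E (n + 1)) :
      (c.map f).reindex i.succAbove = (c.reindex i.succAbove).map f := rfl
  exact altFaceSum_mapDomain hface x

lemma barBoundary_mapRange (f : A →+ B) (x : DiffSimplex E (n + 1) →₀ A) :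
    barBoundary E n (Finsupp.mapRange.addMonoidHom f x) =
      Finsupp.mapRange.addMonoidHom f (barBoundary E n x) := by
  rw [barBoundary, barBoundary, altFaceSum_apply, altFaceSum_apply, map_sum]
  refine Finset.sum_congr rfl fun i _ => ?_
  rw [map_zsmul]
  exact congrArg _ (Finsupp.mapDomain_mapRange _ _ _ (map_zero f) (map_add f))

/-- The cap product with the class in `H¹(E, A)` of a homomorphism `a : E →+ A`, which evaluates
`a` on the first edge of a simplex. -/
def capProduct (a : E →+ A) (n : ℕ) : (DiffSimplex E (n + 1) →₀ ℤ) →+ (DiffSimplex E n →₀ A) :=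
  Finsupp.liftAddHom fun c =>
    (Finsupp.singleAddHom (c.reindex Fin.succ)).comp (zmultiplesHom A (a (c.diff 0 1)))

lemma capProduct_single (a : E →+ A) (c : DiffSimplex E (n + 1)) (k : ℤ) :
    capProduct a n (Finsupp.single c k) =
      Finsupp.single (c.reindex Fin.succ) (k • a (c.diff 0 1)) := by
  simp [capProduct]

lemma capProduct_comp (f : A →+ B) (a : E →+ A) (x : DiffSimplex E (n + 1) →₀ ℤ) :
    capProduct (f.comp a) n x = Finsupp.mapRange.addMonoidHom f (capProduct a n x) := by
  induction x using Finsupp.induction_linear with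
  | zero => simp only [map_zero]
  | add x y hx hy => simp only [map_add, hx, hy]
  | single c k => simp [capProduct_single]

lemma capProduct_mapDomain (f : E →+ E') (a : E' →+ A) (x : DiffSimplex E (n + 1) →₀ ℤ) :
    capProduct a n (Finsupp.mapDomain (DiffSimplex.map f) x) =
      Finsupp.mapDomain (DiffSimplex.map f) (capProduct (a.comp f) n x) := by
  induction x using Finsupp.induction_linear with
  | zero => simp only [map_zero, Finsupp.mapDomain_zero]
  | add x y hx hy => simp only [map_add, hx, hy, Finsupp.mapDomain_add]
  | single c k =>
    rw [capProduct_single, Finsupp.mapDomain_single, capProduct_single, Finsupp.mapDomain_single]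
    rfl

open TupleChain in
lemma capProduct_toBar (a : E →+ A) (x : TupleChain E (n + 2)) :
    capProduct a n (toBar x) = edgeLift (fun v w =>
      (Finsupp.mapRange.addMonoidHom (zmultiplesHom A (a (w - v)))).comp toBar) x := by
  suffices (capProduct a n).comp toBar = edgeLift (fun v w =>
      (Finsupp.mapRange.addMonoidHom (zmultiplesHom A (a (w - v)))).comp toBar) from
    DFunLike.congr_fun this x
  refine hom_ext_cone fun v => hom_ext_cone fun w => Finsupp.addHom_ext fun u k => ?_
  simp only [AddMonoidHom.comp_apply, edgeLift_cone_cone]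
  rw [cone_single, cone_single, toBar_single, toBar_single, capProduct_single]
  simp only [Finsupp.mapRange.addMonoidHom_apply, Finsupp.mapRange_single, zmultiplesHom_apply]
  rfl

open TupleChain in
lemma barBoundary_capProduct (a : E →+ A) (x : DiffSimplex E (n + 2) →₀ ℤ) :
    barBoundary E n (capProduct a (n + 1) x) = -capProduct a n (barBoundary E (n + 1) x) := by
  obtain ⟨x, rfl⟩ := toBar_surjective x
  suffices ((barBoundary E n).comp (capProduct a (n + 1))).comp toBar =
      -((capProduct a n).comp (barBoundary E (n + 1))).comp toBar from DFunLike.congr_fun this x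
  refine hom_ext_cone fun v => hom_ext_cone fun w => AddMonoidHom.ext fun x => ?_
  change barBoundary E n (capProduct a (n + 1) (toBar (cone v (cone w x)))) =
    -capProduct a n (barBoundary E (n + 1) (toBar (cone v (cone w x))))
  rw [capProduct_toBar, edgeLift_cone_cone, AddMonoidHom.comp_apply, barBoundary_mapRange,
    barBoundary_toBar, barBoundary_toBar, capProduct_toBar, edgeLift_boundary, neg_neg]
  · rfl
  · intro u v w
    rw [← AddMonoidHom.add_comp]
    refine congrArg (AddMonoidHom.comp · toBar) (Finsupp.addHom_ext fun c k => ?_)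
    simp [← Finsupp.single_add, ← smul_add]

section RankOne

open TupleChain

variable (a : E →+ ℤ) (e : E)

/-- The product with the class of `e`, after projection along `e`. -/
def prismProj (n : ℕ) : (DiffSimplex E n →₀ ℤ) →+ (DiffSimplex E (n + 1) →₀ ℤ) :=
  descend ((toBar.comp (prism e (n + 1))).comp (map (projAlong a e)))

lemma prismProj_toBar (x : TupleChain E (n + 1)) :
    prismProj a e n (toBar x) = toBar (prism e (n + 1) (map (projAlong a e) x)) := by
  refine descend_toBar (fun u x => ?_) x
  simp only [AddMonoidHom.comp_apply]
  rw [map_projAlong_map_add, prism_map_add, toBar_map_add]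

lemma barBoundary_prismProj (x : DiffSimplex E (n + 1) →₀ ℤ) :
    barBoundary E (n + 1) (prismProj a e (n + 1) x) = -prismProj a e n (barBoundary E n x) := by
  obtain ⟨x, rfl⟩ := toBar_surjective x
  rw [barBoundary_toBar, prismProj_toBar, prismProj_toBar, barBoundary_toBar, boundary_prism,
    map_sub, map_sub, toBar_map_add, sub_self, zero_sub, boundary_map]

lemma toBar_straighten (x : TupleChain E (n + 1)) :
    toBar (straighten a e n x) = toBar (map (projAlong a e) x) := by
  suffices toBar.comp (straighten a e n) = toBar.comp (map (projAlong a e)) from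
    DFunLike.congr_fun this x
  refine hom_ext_cone fun v => AddMonoidHom.ext fun x => ?_
  change toBar (straighten a e n (cone v x)) = toBar (map (projAlong a e) (cone v x))
  rw [straighten_cone, ← map_add_map_projAlong, toBar_map_add]

lemma toBar_correction (x : TupleChain E (n + 2)) :
    toBar (correction a e (n + 1) x) = prismProj a e n (capProduct a n (toBar x)) := by
  suffices toBar.comp (correction a e (n + 1)) =
      ((prismProj a e n).comp (capProduct a n)).comp toBar from DFunLike.congr_fun this x
  refine hom_ext_cone fun v => hom_ext_cone fun w => AddMonoidHom.ext fun x => ?_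
  change toBar (correction a e (n + 1) (cone v (cone w x))) =
    prismProj a e n (capProduct a n (toBar (cone v (cone w x))))
  have hsmul (z : DiffSimplex E n →₀ ℤ) :
      Finsupp.mapRange.addMonoidHom (zmultiplesHom ℤ (a (w - v))) z = a (w - v) • z :=
    Finsupp.ext fun c => by simp [mul_comm]
  have hgap : toBar (fillGap a e v w (n + 1) (cone w x)) =
      a w • prismProj a e n (toBar (cone w x)) - a v • prismProj a e n (toBar (cone w x)) := by
    rw [fillGap, AddMonoidHom.comp_apply, AddMonoidHom.comp_apply, ← AddMonoidHom.comp_apply toBar]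
    refine map_translateSumBetween _ (g := fun j => j • prismProj a e n (toBar (cone w x)))
      (fun j => ?_) _ _
    rw [AddMonoidHom.comp_apply, prism_map_add, toBar_map_add, prismProj_toBar, add_smul,
      one_smul, add_sub_cancel_left]
  rw [correction, edgeLift_cone_cone, hgap, capProduct_toBar, edgeLift_cone_cone,
    AddMonoidHom.comp_apply, hsmul, map_zsmul, map_sub, sub_smul]

lemma toBar_projLift (x : TupleChain E (n + 2)) :
    toBar (projLift a e (n + 2) x) =
      Finsupp.mapDomain (DiffSimplex.map (projAlong a e)) (toBar x) +
        prismProj a e n (capProduct a n (toBar x)) := by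
  rw [← toBar_map, ← toBar_straighten, ← toBar_correction, ← map_add]
  rfl

variable {a} in
lemma exists_eq_mapDomain_projAlong_add_barBoundary {x y : DiffSimplex E (n + 1) →₀ ℤ}
    (hx : barBoundary E n x = 0) (hy : capProduct a n x = barBoundary E n y) :
    ∃ w, x = Finsupp.mapDomain (DiffSimplex.map (projAlong a e)) x +
      barBoundary E (n + 1) w := by
  let φ (m : ℕ) : TupleChain E m →+ TupleChain E m := AddMonoidHom.id _ - projLift a e m
  have hφ (m : ℕ) (u : E) (z : TupleChain E m) : φ m (map (· + u) z) = map (· + u) (φ m z) :=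
    (congrArg (map (· + u) z - ·) (projLift_map_add u z)).trans (map_sub (map (· + u)) _ _).symm
  have hφ₀ : φ 0 = 0 := sub_self _
  have hφ_boundary (m : ℕ) (z : TupleChain E (m + 1)) :
      boundary E m (φ (m + 1) z) = φ m (boundary E m z) :=
    (map_sub _ _ _).trans (congrArg (boundary E m z - ·) (boundary_projLift z))
  have hdescend (z : TupleChain E (n + 1)) :
      descend (toBar.comp (coneHomotopy φ (n + 1))) (toBar z) =
        toBar (coneHomotopy φ (n + 1) z) :=
    descend_toBar (fun u z => (congrArg toBar (coneHomotopy_map (fun m => hφ m u) z)).trans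
      (toBar_map_add u _)) z
  obtain ⟨z, rfl⟩ := toBar_surjective x
  have hhomotopy := congrArg toBar (boundary_coneHomotopy_add hφ₀ hφ_boundary z)
  rw [map_add, ← barBoundary_toBar, ← hdescend, ← barBoundary_toBar, hx, map_zero,
    add_zero] at hhomotopy
  refine ⟨toBar (coneHomotopy φ (n + 2) z) - prismProj a e (n + 1) y, ?_⟩
  rw [map_sub, hhomotopy, barBoundary_prismProj, ← hy, sub_neg_eq_add, add_left_comm,
    ← toBar_projLift, ← map_add]
  exact congrArg toBar (sub_add_cancel _ _).symm

end RankOne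

end CapProduct

section TorsionFree

variable {E A : Type} [AddCommGroup E] [AddCommGroup A] {n : ℕ}

lemma DiffSimplex.map_id : DiffSimplex.map (n := n) (AddMonoidHom.id E) = id := rfl

lemma DiffSimplex.map_injective {B : Type} [AddCommGroup B] {f : E →+ B}
    (hf : Function.Injective f) : Function.Injective (DiffSimplex.map (n := n) f) :=
  fun _ _ h => DiffSimplex.ext <| funext₂ fun i j => hf (congrArg (·.diff i j) h)

lemma exists_eq_mapDomain_projAlong_finset_add_barBoundary {I : Type} {a : I → E →+ ℤ} {e : I → E}
    (hae : ∀ i j, i ≠ j → a i (e j) = 0) {x : DiffSimplex E (n + 1) →₀ ℤ}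
    (hx : barBoundary E n x = 0) (hy : ∀ i, ∃ y, capProduct (a i) n x = barBoundary E n y)
    (s : Finset I) :
    ∃ w, x = Finsupp.mapDomain (DiffSimplex.map
      (AddMonoidHom.id E - ∑ i ∈ s, (zmultiplesHom E (e i)).comp (a i))) x +
        barBoundary E (n + 1) w := by
  classical
  induction s using Finset.induction_on with
  | empty =>
    refine ⟨0, ?_⟩
    rw [Finset.sum_empty, sub_zero, DiffSimplex.map_id, Finsupp.mapDomain_id, map_zero, add_zero]
  | insert j s hj ih =>
    set f := AddMonoidHom.id E - ∑ i ∈ s, (zmultiplesHom E (e i)).comp (a i) with hf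
    obtain ⟨w, hw⟩ := ih
    obtain ⟨y, hy⟩ := hy j
    have hsum (v : E) : a j (∑ i ∈ s, a i v • e i) = 0 := by
      rw [map_sum]
      refine Finset.sum_eq_zero fun i hi => ?_
      rw [map_zsmul, hae j i (ne_of_mem_of_not_mem hi hj).symm, smul_zero]
    have haf : (a j).comp f = a j := AddMonoidHom.ext fun v => by simp [hf, hsum]
    have hcycle : barBoundary E n (Finsupp.mapDomain (DiffSimplex.map f) x) = 0 := by
      rw [barBoundary_mapDomain, hx, Finsupp.mapDomain_zero]
    have hcap : capProduct (a j) n (Finsupp.mapDomain (DiffSimplex.map f) x) =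
        barBoundary E n (Finsupp.mapDomain (DiffSimplex.map f) y) := by
      rw [capProduct_mapDomain, haf, hy, barBoundary_mapDomain]
    obtain ⟨w', hw'⟩ := exists_eq_mapDomain_projAlong_add_barBoundary (e j) hcycle hcap
    have hproj : (TupleChain.projAlong (a j) (e j)).comp f =
        AddMonoidHom.id E - ∑ i ∈ insert j s, (zmultiplesHom E (e i)).comp (a i) := by
      rw [TupleChain.projAlong, AddMonoidHom.sub_comp, AddMonoidHom.comp_assoc, haf,
        AddMonoidHom.id_comp,
        Finset.sum_insert hj, hf]
      abel
    refine ⟨w' + w, ?_⟩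
    rw [map_add, ← add_assoc, ← hproj]
    refine hw.trans (congrArg (· + _) (hw'.trans (congrArg (· + _) ?_)))
    exact Finsupp.mapDomain_comp.symm

lemma exists_eq_mapDomain_add_barBoundary_of_free [Module.Free ℤ A] [Module.Finite ℤ A]
    {a : E →+ A} {s : A →+ E} (hs : ∀ t, a (s t) = t) {x : DiffSimplex E (n + 1) →₀ ℤ}
    (hx : barBoundary E n x = 0) {y : DiffSimplex E (n + 1) →₀ A}
    (hy : capProduct a n x = barBoundary E n y) :
    ∃ w, x = Finsupp.mapDomain (DiffSimplex.map (AddMonoidHom.id E - s.comp a)) x +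
      barBoundary E (n + 1) w := by
  let b := Module.Free.chooseBasis ℤ A
  let coord (i) : A →+ ℤ := (b.coord i).toAddMonoidHom
  have hdual (i j) (hij : i ≠ j) : (coord i).comp a (s (b j)) = 0 := by
    simp [coord, hs, hij.symm]
  have hcap (i) : capProduct ((coord i).comp a) n x =
      barBoundary E n (Finsupp.mapRange.addMonoidHom (coord i) y) := by
    rw [capProduct_comp, hy, barBoundary_mapRange]
  have hproj : ∑ i, (zmultiplesHom E (s (b i))).comp ((coord i).comp a) = s.comp a := by
    refine AddMonoidHom.ext fun v => ?_
    conv_rhs => rw [AddMonoidHom.comp_apply, ← b.sum_repr (a v), map_sum]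
    simp [coord]
  rw [← hproj]
  exact exists_eq_mapDomain_projAlong_finset_add_barBoundary hdual hx (fun i => ⟨_, hcap i⟩) _

lemma exists_mapDomain_map_subtype_eq (S : AddSubgroup E) {x : DiffSimplex E n →₀ A}
    (hx : ∀ c ∈ x.support, ∀ i j, c.diff i j ∈ S) :
    ∃ x' : DiffSimplex S n →₀ A, Finsupp.mapDomain (DiffSimplex.map S.subtype) x' = x :=
  ⟨_, Finsupp.mapDomain_comapDomain _ (DiffSimplex.map_injective S.subtype_injective) x
    fun c hc => ⟨⟨fun i j => ⟨c.diff i j, hx c hc i j⟩,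
      fun i j k => Subtype.ext (c.diff_add_diff i j k)⟩, rfl⟩⟩

lemma exists_mapRange_subtype_eq (S : AddSubgroup A) {T : Type} {x : T →₀ A}
    (hx : ∀ t, x t ∈ S) : ∃ x' : T →₀ S, Finsupp.mapRange.addMonoidHom S.subtype x' = x := by
  classical
  refine ⟨x.mapRange (fun t => if h : t ∈ S then ⟨t, h⟩ else 0) (by simp), Finsupp.ext fun t => ?_⟩
  simp [hx t]

lemma exists_eq_mapDomain_add_barBoundary_of_mem (A₀ : AddSubgroup A) [Module.Free ℤ A₀]
    [Module.Finite ℤ A₀] {a : E →+ A} {s : A →+ E} (hs : ∀ t, a (s t) = t)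
    {x : DiffSimplex E (n + 1) →₀ ℤ} (hx : barBoundary E n x = 0)
    {y : DiffSimplex E (n + 1) →₀ A} (hy : capProduct a n x = barBoundary E n y)
    (hxA₀ : ∀ c ∈ x.support, ∀ i j, a (c.diff i j) ∈ A₀)
    (hyA₀ : ∀ c ∈ y.support, ∀ i j, a (c.diff i j) ∈ A₀) (hvalue : ∀ c, y c ∈ A₀) :
    ∃ w, x = Finsupp.mapDomain (DiffSimplex.map (AddMonoidHom.id E - s.comp a)) x +
      barBoundary E (n + 1) w := by
  let E₀ : AddSubgroup E := A₀.comap a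
  let a₀ : E₀ →+ A₀ := (a.comp E₀.subtype).codRestrict A₀ (·.2)
  let s₀ : A₀ →+ E₀ := (s.comp A₀.subtype).codRestrict E₀ fun t => by
    simp [E₀, hs]
  have hinj (m : ℕ) := DiffSimplex.map_injective (n := m) E₀.subtype_injective
  obtain ⟨x, rfl⟩ := exists_mapDomain_map_subtype_eq E₀ hxA₀
  obtain ⟨y, rfl⟩ := exists_mapDomain_map_subtype_eq E₀ hyA₀
  obtain ⟨y, rfl⟩ := exists_mapRange_subtype_eq A₀ (x := y) fun c => by
    rw [← Finsupp.mapDomain_apply (hinj _) y c]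
    exact hvalue _
  have hx₀ : barBoundary E₀ n x = 0 := by
    refine Finsupp.mapDomain_injective (hinj n) ?_
    rw [← barBoundary_mapDomain, hx, Finsupp.mapDomain_zero]
  have hy₀ : capProduct a₀ n x = barBoundary E₀ n y := by
    refine Finsupp.mapRange_injective _ (map_zero _) A₀.subtype_injective
      (Finsupp.mapDomain_injective (hinj n) ?_)
    rw [capProduct_mapDomain, barBoundary_mapDomain, barBoundary_mapRange] at hy
    exact (congrArg _ (capProduct_comp A₀.subtype a₀ x)).symm.trans hy
  obtain ⟨w, hw⟩ := exists_eq_mapDomain_add_barBoundary_of_free (s := s₀)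
    (fun t => Subtype.ext (hs t)) hx₀ hy₀
  refine ⟨Finsupp.mapDomain (DiffSimplex.map E₀.subtype) w, ?_⟩
  refine (congrArg (Finsupp.mapDomain (DiffSimplex.map E₀.subtype)) hw).trans ?_
  rw [Finsupp.mapDomain_add, barBoundary_mapDomain, ← Finsupp.mapDomain_comp,
    ← Finsupp.mapDomain_comp]
  rfl

lemma exists_eq_mapDomain_add_barBoundary [IsAddTorsionFree A] {a : E →+ A} {s : A →+ E}
    (hs : ∀ t, a (s t) = t) {x : DiffSimplex E (n + 1) →₀ ℤ} (hx : barBoundary E n x = 0)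
    {y : DiffSimplex E (n + 1) →₀ A} (hy : capProduct a n x = barBoundary E n y) :
    ∃ w, x = Finsupp.mapDomain (DiffSimplex.map (AddMonoidHom.id E - s.comp a)) x +
      barBoundary E (n + 1) w := by
  classical
  let F : Finset A := y.support.image y ∪ (x.support ∪ y.support).biUnion fun c =>
    Finset.univ.image fun ij : Fin (n + 2) × Fin (n + 2) => a (c.diff ij.1 ij.2)
  let A₀ : AddSubgroup A := (Submodule.span ℤ (F : Set A)).toAddSubgroup
  have : Module.Finite ℤ A₀ := Module.Finite.span_of_finite ℤ F.finite_toSet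
  have : Module.Free ℤ A₀ := inferInstance
  have hdiff (c) (hc : c ∈ x.support ∪ y.support) (i j) : a (c.diff i j) ∈ A₀ :=
    Submodule.subset_span <| Finset.mem_union_right _ <|
      Finset.mem_biUnion.2 ⟨c, hc, Finset.mem_image_of_mem _ (Finset.mem_univ (i, j))⟩
  refine exists_eq_mapDomain_add_barBoundary_of_mem A₀ hs hx hy
    (fun c hc => hdiff c (Finset.mem_union_left _ hc))
    (fun c hc => hdiff c (Finset.mem_union_right _ hc)) fun c => ?_
  by_cases hc : c ∈ y.support
  · exact Submodule.subset_span (Finset.mem_union_left _ (Finset.mem_image_of_mem y hc))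
  · rw [Finsupp.notMem_support_iff.1 hc]
    exact A₀.zero_mem

end TorsionFree

section TensorCoefficients

open TensorProduct

variable {S T A : Type} [AddCommGroup A]

/-- The identification of `ℤ[S] ⊗ A` with the chains on `S` with coefficients in `A`. -/
def finsuppTensorEquiv (S A : Type) [AddCommGroup A] [Module ℤ A] :
    (S →₀ ℤ) ⊗[ℤ] A ≃+ (S →₀ A) :=
  haveI := Classical.decEq S
  { TensorProduct.finsuppScalarLeft ℤ A S with
    map_add' := map_add (TensorProduct.finsuppScalarLeft ℤ A S) }

lemma finsuppTensorEquiv_single_tmul [hA : Module ℤ A] (s : S) (k : ℤ) (t : A) :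
    finsuppTensorEquiv S A (Finsupp.single s k ⊗ₜ t) = Finsupp.single s (k • t) := by
  obtain rfl : hA = AddCommGroup.toIntModule A := Subsingleton.elim _ _
  let _ := Classical.decEq S
  refine (TensorProduct.finsuppScalarLeft_apply_tmul (Finsupp.single s k) t).trans ?_
  exact Finsupp.sum_single_index (by simp)

lemma finsuppTensorEquiv_rTensor {n : ℕ} {d : Fin n → S → T} [Module ℤ A]
    {f : (S →₀ ℤ) →ₗ[ℤ] (T →₀ ℤ)} (hf : ∀ x, f x = altFaceSum d x) (y : (S →₀ ℤ) ⊗[ℤ] A) :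
    finsuppTensorEquiv T A (f.rTensor A y) = altFaceSum d (finsuppTensorEquiv S A y) := by
  induction y using TensorProduct.induction_on with
  | zero => simp only [map_zero]
  | add x y hx hy => simp only [map_add, hx, hy]
  | tmul x t =>
    induction x using Finsupp.induction_linear with
    | zero => simp only [zero_tmul, map_zero]
    | add x y hx hy => simp only [add_tmul, map_add, hx, hy]
    | single s k =>
      rw [LinearMap.rTensor_tmul, hf, finsuppTensorEquiv_single_tmul, altFaceSum_apply,
        altFaceSum_apply, sum_tmul, map_sum]
      refine Finset.sum_congr rfl fun i _ => ?_
      rw [Finsupp.mapDomain_single, Finsupp.mapDomain_single, ← smul_tmul', map_zsmul,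
        finsuppTensorEquiv_single_tmul]

variable {E : Type} [AddCommGroup E] [Module ℤ A] {n : ℕ}

/-- The cap product with a homomorphism `a : E →+ A`, with values in the tensor product. -/
def capTensor (a : E →+ A) (n : ℕ) :
    (DiffSimplex E (n + 1) →₀ ℤ) →+ (DiffSimplex E n →₀ ℤ) ⊗[ℤ] A :=
  (finsuppTensorEquiv (DiffSimplex E n) A).symm.toAddMonoidHom.comp (capProduct a n)

lemma finsuppTensorEquiv_capTensor (a : E →+ A) (x : DiffSimplex E (n + 1) →₀ ℤ) :
    finsuppTensorEquiv (DiffSimplex E n) A (capTensor a n x) = capProduct a n x :=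
  AddEquiv.apply_symm_apply _ _

lemma capTensor_single (a : E →+ A) (c : DiffSimplex E (n + 1)) (k : ℤ) :
    capTensor a n (Finsupp.single c k) =
      Finsupp.single (c.reindex Fin.succ) k ⊗ₜ a (c.diff 0 1) := by
  refine (finsuppTensorEquiv _ A).injective ?_
  rw [finsuppTensorEquiv_capTensor, capProduct_single, finsuppTensorEquiv_single_tmul]

end TensorCoefficients

section NiceModule

open Limits MonoidalCategory TensorProduct

attribute [local instance 10000] Rep.hV2

variable {E A : Rep.{0} ℤ G} {π : Set ℕ} {n : ℕ}

lemma capTensor_equivariant (a : E ⟶ A) (g : G) (x : DiffSimplex E (n + 1) →₀ ℤ) :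
    capTensor (a.hom.toLinearMap : E →+ A) n (Finsupp.mapDomain (g • ·) x) =
      (permRep (G := G) (DiffSimplex E n) ⊗ A).ρ g
        (capTensor (a.hom.toLinearMap : E →+ A) n x) := by
  induction x using Finsupp.induction_linear with
  | zero => simp only [map_zero, Finsupp.mapDomain_zero]
  | add x y hx hy => simp only [map_add, hx, hy, Finsupp.mapDomain_add]
  | single c k =>
    rw [Finsupp.mapDomain_single, capTensor_single, capTensor_single]
    exact congrArg₂ (· ⊗ₜ[ℤ] ·) (permRep_ρ_single g (c.reindex Fin.succ) k).symm
      (Rep.hom_comm_apply a g _)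

/-- The cap product with a morphism `a : E ⟶ A`, as a morphism of `ℤG`-modules. -/
def capRep (a : E ⟶ A) (n : ℕ) :
    (barComplex.obj E).X (n + 1) ⟶ (barComplex.obj E).X n ⊗ A :=
  repHom (A := permRep (DiffSimplex E (n + 1))) (B := permRep (DiffSimplex E n) ⊗ A)
    (capTensor (a.hom.toLinearMap : E →+ A) n) (capTensor_equivariant a)

lemma finsuppTensorEquiv_d_whiskerRight (E A : Rep.{0} ℤ G)
    (y : (DiffSimplex E (n + 1) →₀ ℤ) ⊗[ℤ] A) :
    finsuppTensorEquiv (DiffSimplex E n) A (((barComplex.obj E).d (n + 1) n ▷ A).hom y) =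
      barBoundary E n (finsuppTensorEquiv (DiffSimplex E (n + 1)) A y) :=
  finsuppTensorEquiv_rTensor (f := ((barComplex.obj E).d (n + 1) n).hom.toLinearMap)
    (barComplex_d_apply E n) y

lemma capRep_comp_d (a : E ⟶ A) (n : ℕ) :
    capRep a (n + 1) ≫ ((barComplex.obj E).d (n + 1) n ▷ A) =
      -((barComplex.obj E).d (n + 2) (n + 1) ≫ capRep a n) := by
  refine rep_hom_ext fun x => (finsuppTensorEquiv (DiffSimplex E n) A).injective ?_
  refine (finsuppTensorEquiv_d_whiskerRight E A _).trans ?_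
  refine (congrArg _ (finsuppTensorEquiv_capTensor _ x)).trans ?_
  refine (barBoundary_capProduct _ x).trans ?_
  refine Eq.trans ?_ (map_neg (finsuppTensorEquiv (DiffSimplex E n) A) _).symm
  refine congrArg (- ·) ?_
  refine Eq.trans ?_ (finsuppTensorEquiv_capTensor _ _).symm
  exact congrArg _ (barComplex_d_apply E (n + 1) x).symm

/-- The components of the cap product with `a : E ⟶ A` as a morphism of complexes of degree `-1`,
with the signs that make it commute with the differentials. In degree `0` it is zero. -/
def signedCap (a : E ⟶ A) : (n : ℕ) → ((barComplex.obj E).X n ⟶ (barComplex.obj E).X (n - 1) ⊗ A)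
  | 0 => 0
  | n + 1 => (-1 : ℤ) ^ n • capRep a n

lemma signedCap_comp_d (a : E ⟶ A) (n : ℕ) :
    signedCap a (n + 1) ≫ ((barComplex.obj E).d n (n - 1) ▷ A) =
      (barComplex.obj E).d (n + 1) n ≫ signedCap a n := by
  cases n with
  | zero =>
    refine Eq.trans ?_ comp_zero.symm
    have hd : (barComplex.obj E).d 0 (0 - 1) ▷ A = 0 :=
      (congrArg (tensorRight A).map ((barComplex.obj E).shape _ _ (by simp))).trans
        ((tensorRight A).map_zero _ _)
    rw [hd, comp_zero]
  | succ n =>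
    refine (Linear.smul_comp _ _ _ _ _ _).trans ?_
    refine Eq.trans ?_ (Linear.comp_smul _ _ _ _ _ _).symm
    refine (congrArg _ (capRep_comp_d a n)).trans ?_
    rw [pow_succ, mul_neg_one, neg_smul_neg]

/-- The cap product with `a : E ⟶ A` on the part of the bar complex computing homology in degree
`n + 1`. -/
def capShortComplex (a : E ⟶ A) (n : ℕ) : (barComplex.obj E).sc' (n + 2) (n + 1) n ⟶
    ((barComplex.obj E).sc' (n + 1) n (n - 1)).map (tensorRight A) where
  τ₁ := signedCap a (n + 2)
  τ₂ := signedCap a (n + 1)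
  τ₃ := signedCap a n
  comm₁₂ := signedCap_comp_d a (n + 1)
  comm₂₃ := signedCap_comp_d a n

lemma capProduct_eq_barBoundary (a : E ⟶ A) {x : DiffSimplex E (n + 1) →₀ ℤ}
    {y : (DiffSimplex E (n + 1) →₀ ℤ) ⊗[ℤ] A}
    (hy : ((barComplex.obj E).d (n + 1) n ▷ A).hom y = (signedCap a (n + 1)).hom x) :
    ∃ y, capProduct (a.hom.toLinearMap : E →+ A) n x = barBoundary E n y := by
  have hy' : barBoundary E n (finsuppTensorEquiv _ A y) =
      (-1 : ℤ) ^ n • capProduct (a.hom.toLinearMap : E →+ A) n x := by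
    refine (finsuppTensorEquiv_d_whiskerRight E A y).symm.trans ?_
    refine (congrArg _ hy).trans ?_
    refine Eq.trans (map_zsmul (finsuppTensorEquiv (DiffSimplex E n) A) ((-1) ^ n)
      (capTensor (a.hom.toLinearMap : E →+ A) n x)) ?_
    rw [finsuppTensorEquiv_capTensor]
  refine ⟨(-1 : ℤ) ^ n • finsuppTensorEquiv _ A y, ?_⟩
  rw [map_zsmul, hy', smul_smul, ← mul_pow, neg_one_mul, neg_neg, one_pow, one_smul]

lemma epiModSerre_of_ker_le_range {X Y Z : Rep.{0} ℤ G} {f : X ⟶ Y} {g : Y ⟶ Z}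
    (h : ∀ y, g.hom y = 0 → ∃ x, f.hom x = y) (hZ : classC G π Z) :
    (classC G π).epiModSerre f := by
  have hπ : kernel.ι g ≫ cokernel.π f = 0 := rep_hom_ext fun z => by
    obtain ⟨x, hx⟩ := h _ (congrArg (fun φ => φ.hom z) (kernel.condition g))
    refine (congrArg (cokernel.π f).hom hx).symm.trans ?_
    exact congrArg (fun φ => φ.hom x) (cokernel.condition f)
  have : Epi (cokernel.desc (kernel.ι g) (cokernel.π f) hπ) :=
    epi_of_epi_fac (cokernel.π_desc _ _ _)
  exact (classC G π).prop_of_epi (cokernel.desc (kernel.ι g) (cokernel.π f) hπ)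
    ((classC G π).prop_of_mono (Abelian.factorThruCoimage g) hZ)

lemma exists_iCycles_eq (S : ShortComplex (Rep.{0} ℤ G)) {x : S.X₂} (hx : S.g.hom x = 0) :
    ∃ z : S.cycles, S.iCycles.hom z = x :=
  (rep_exact_iff (ShortComplex.mk S.iCycles S.g S.iCycles_g)).1
    (ShortComplex.exact_of_f_is_kernel _ S.cyclesIsKernel) x hx

lemma exists_toCycles_eq (S : ShortComplex (Rep.{0} ℤ G)) {z : S.cycles}
    (hz : S.homologyπ.hom z = 0) : ∃ w : S.X₁, S.toCycles.hom w = z :=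
  (rep_exact_iff (ShortComplex.mk S.toCycles S.homologyπ S.toCycles_comp_homologyπ)).1
    (ShortComplex.exact_of_g_is_cokernel _ S.homologyIsCokernel) z hz

lemma homologyπ_eq_of_eq_add {S T : ShortComplex (Rep.{0} ℤ G)} (f : S ⟶ T) {z : T.cycles}
    {z' : S.cycles} {w : T.X₁}
    (h : T.iCycles.hom z = f.τ₂.hom (S.iCycles.hom z') + T.f.hom w) :
    (ShortComplex.homologyMap f).hom (S.homologyπ.hom z') = T.homologyπ.hom z := by
  have hz : z = (ShortComplex.cyclesMap f).hom z' + T.toCycles.hom w := by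
    refine (Rep.mono_iff_injective T.iCycles).1 inferInstance (h.trans ?_)
    refine Eq.trans ?_ (map_add T.iCycles.hom _ _).symm
    exact congrArg₂ (· + ·) (congrArg (fun φ => φ.hom z') (ShortComplex.cyclesMap_i f)).symm
      (congrArg (fun φ => φ.hom w) T.toCycles_i).symm
  have hw : T.homologyπ.hom (T.toCycles.hom w) = 0 :=
    congrArg (fun φ => φ.hom w) T.toCycles_comp_homologyπ
  rw [hz, map_add, hw, add_zero]
  exact (congrArg (fun φ => φ.hom z') (ShortComplex.homologyπ_naturality f))

lemma epiModSerre_homologyMap_of_cycles {S₀ S₁ S₂ : ShortComplex (Rep.{0} ℤ G)} (f : S₀ ⟶ S₁)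
    (g : S₁ ⟶ S₂) (h : ∀ x : S₁.X₂, S₁.g.hom x = 0 → (∃ y, S₂.f.hom y = g.τ₂.hom x) →
      ∃ x', S₀.g.hom x' = 0 ∧ ∃ w, x = f.τ₂.hom x' + S₁.f.hom w)
    (hS₂ : classC G π S₂.homology) :
    (classC G π).epiModSerre (ShortComplex.homologyMap f) := by
  refine epiModSerre_of_ker_le_range (g := ShortComplex.homologyMap g) (fun x hx => ?_) hS₂
  obtain ⟨z, rfl⟩ := (Rep.epi_iff_surjective S₁.homologyπ).1 inferInstance x
  have hgz : S₂.homologyπ.hom ((ShortComplex.cyclesMap g).hom z) = 0 :=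
    (congrArg (fun φ => φ.hom z) (ShortComplex.homologyπ_naturality g)).symm.trans hx
  obtain ⟨y, hy⟩ := exists_toCycles_eq S₂ hgz
  have hfy : S₂.f.hom y = g.τ₂.hom (S₁.iCycles.hom z) :=
    (congrArg (fun φ => φ.hom y) S₂.toCycles_i).symm.trans <|
      (congrArg S₂.iCycles.hom hy).trans (congrArg (fun φ => φ.hom z) (ShortComplex.cyclesMap_i g))
  obtain ⟨x', hx', w, hw⟩ := h _ (congrArg (fun φ => φ.hom z) S₁.iCycles_g) ⟨y, hfy⟩
  obtain ⟨z', rfl⟩ := exists_iCycles_eq S₀ hx'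
  exact ⟨S₀.homologyπ.hom z', homologyπ_eq_of_eq_add f hw⟩

lemma epiModSerre_homologyMap_of_sc' {C D : ChainComplex (Rep.{0} ℤ G) ℕ} (φ : C ⟶ D)
    {i j k : ℕ} (hi : (ComplexShape.down ℕ).prev j = i) (hk : (ComplexShape.down ℕ).next j = k)
    (h : (classC G π).epiModSerre (ShortComplex.homologyMap
      ((HomologicalComplex.shortComplexFunctor' _ _ i j k).map φ))) :
    (classC G π).epiModSerre (HomologicalComplex.homologyMap φ j) := by
  subst hi hk
  exact h

lemma classC_homology_sc'_tensor (hA : NiceRep π A) (C : ChainComplex (Rep.{0} ℤ G) ℕ) {i j k : ℕ}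
    (hi : (ComplexShape.down ℕ).prev j = i) (hk : (ComplexShape.down ℕ).next j = k)
    (h : classC G π (C.homology j)) :
    classC G π ((C.sc' i j k).map (tensorRight A)).homology := by
  subst hi hk
  have := (niceRep_iff.1 hA).flat
  have : (tensorRight A).PreservesHomology :=
    Functor.preservesHomology_of_map_exact _ fun _ => rep_exact_tensorRight
  have e := ShortComplex.mapHomologyIso (C.sc j) (tensorRight A)
  exact (classC G π).prop_of_iso e.symm (classC_tensor hA h)

lemma exists_cycle_eq_add_barBoundary (hA : NiceRep π A) (B : Rep.{0} ℤ G)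
    {x : DiffSimplex ↑(A ⊞ B) (n + 1) →₀ ℤ} (hx : barBoundary ↑(A ⊞ B) n x = 0)
    {y : DiffSimplex ↑(A ⊞ B) (n + 1) →₀ A}
    (hy : capProduct ((biprod.fst : A ⊞ B ⟶ A).hom.toLinearMap : ↑(A ⊞ B) →+ A) n x =
      barBoundary ↑(A ⊞ B) n y) :
    ∃ w, x = Finsupp.mapDomain (DiffSimplex.mapRep (biprod.inr : B ⟶ A ⊞ B))
      (Finsupp.mapDomain (DiffSimplex.mapRep (biprod.snd : A ⊞ B ⟶ B)) x) +
        barBoundary ↑(A ⊞ B) (n + 1) w := by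
  have := (niceRep_iff.1 hA).isAddTorsionFree
  let s : A →+ ↑(A ⊞ B) := (biprod.inl : A ⟶ A ⊞ B).hom.toLinearMap
  obtain ⟨w, hw⟩ := exists_eq_mapDomain_add_barBoundary (s := s)
    (fun t => congrArg (fun φ => φ.hom t) (biprod.inl_fst : (biprod.inl : A ⟶ A ⊞ B) ≫ _ = _)) hx hy
  refine ⟨w, hw.trans (congrArg (· + _) ?_)⟩
  rw [← Finsupp.mapDomain_comp]
  refine congrArg (Finsupp.mapDomain · x) (funext fun c => DiffSimplex.ext (funext₂ fun i j => ?_))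
  have htotal := congrArg (fun φ => φ.hom (c.diff i j)) (biprod.total (X := A) (Y := B))
  exact sub_eq_of_eq_add' htotal.symm

lemma epiModSerre_barHomology_zero_map (f : E ⟶ A) :
    (classC G π).epiModSerre ((barHomology 0).map f) := by
  have : Subsingleton (DiffSimplex A 0) := ⟨fun c d => DiffSimplex.ext <| funext₂ fun i j => by
    rw [Subsingleton.elim (α := Fin 1) j i, c.diff_self, d.diff_self]⟩
  have : Epi ((barComplex.map f).f 0) := by
    refine (Rep.epi_iff_surjective _).2 fun x =>
      ⟨Finsupp.mapDomain (fun _ => DiffSimplex.ofVertices 0) x, ?_⟩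
    refine Finsupp.mapDomain_comp.symm.trans ?_
    exact (congrArg (Finsupp.mapDomain · x) (Subsingleton.elim _ id)).trans
      Finsupp.mapDomain_id
  have : Epi ((barHomology 0).map f) :=
    HomologicalComplex.epi_homologyMap_of_epi_of_not_rel (barComplex.map f) 0 (by simp)
  exact (classC G π).epiModSerre_of_epi _

lemma isHomologicallySmall_of_niceRep (hA : NiceRep π A) : IsHomologicallySmall π A := by
  intro B n
  induction n using Nat.strong_induction_on with
  | _ n ih =>
  intro hB
  cases n with
  | zero => exact epiModSerre_barHomology_zero_map _
  | succ n =>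
    have hn : classC G π ((barHomology n).obj (A ⊞ B)) :=
      prop_of_epiModSerre _ (ih n n.lt_succ_self fun m hm => hB m (hm.trans n.lt_succ_self))
        (hB n n.lt_succ_self)
    refine epiModSerre_homologyMap_of_sc' (barComplex.map biprod.inr)
      (ChainComplex.prev ℕ (n + 1)) (ChainComplex.next_nat_succ n) ?_
    refine epiModSerre_homologyMap_of_cycles _ (capShortComplex biprod.fst n) ?_
      (classC_homology_sc'_tensor hA (barComplex.obj (A ⊞ B)) (ChainComplex.prev ℕ n)
        (by cases n <;> simp) hn)
    rintro x hx ⟨y, hy⟩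
    obtain ⟨y', hy'⟩ := capProduct_eq_barBoundary biprod.fst hy
    have hx' : barBoundary ↑(A ⊞ B) n x = 0 := (barComplex_d_apply _ n x).symm.trans hx
    obtain ⟨w, hw⟩ := exists_cycle_eq_add_barBoundary hA B hx' hy'
    refine ⟨(barChainMap biprod.snd (n + 1)).hom x, ?_, w, hw.trans ?_⟩
    · refine (barComplex_d_apply B n _).trans ?_
      refine (barBoundary_mapDomain _ x).trans ?_
      exact (congrArg _ hx').trans Finsupp.mapDomain_zero
    · exact congrArg (_ + ·) (barComplex_d_apply _ (n + 1) w).symm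

end NiceModule

section Nerve

attribute [local instance 10000] Rep.hV2

variable {A B : Type} [AddCommGroup A] [AddCommGroup B] {n : ℕ}

/-- The value of an `n`-simplex of the nerve of `A` on an edge. -/
def nerveDiff (F : ComposableArrows (SingleObj (Multiplicative A)) n) {i j : Fin (n + 1)}
    (h : i ≤ j) : A :=
  Multiplicative.toAdd (α := A) (F.map (homOfLE h))

lemma nerveDiff_add_nerveDiff (F : ComposableArrows (SingleObj (Multiplicative A)) n)
    {i j k : Fin (n + 1)} (hij : i ≤ j) (hjk : j ≤ k) :
    nerveDiff F hij + nerveDiff F hjk = nerveDiff F (hij.trans hjk) := by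
  have hmap : F.map (homOfLE (hij.trans hjk)) = F.map (homOfLE hij) ≫ F.map (homOfLE hjk) :=
    F.map_comp (homOfLE hij) (homOfLE hjk)
  rw [add_comm]
  exact (congrArg (Multiplicative.toAdd (α := A)) hmap).symm

namespace DiffSimplex

/-- The simplices of the classifying space of `A` are those of the nerve of `A`. -/
def nerveEquiv : DiffSimplex A n ≃ ComposableArrows (SingleObj (Multiplicative A)) n where
  toFun c :=
    { obj _ := SingleObj.star _
      map {i j} _ := Multiplicative.ofAdd (c.diff i j)
      map_id i := congrArg Multiplicative.ofAdd (c.diff_self i)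
      map_comp {i j k} _ _ := congrArg Multiplicative.ofAdd
        ((c.diff_add_diff i j k).symm.trans (add_comm _ _)) }
  invFun F := ofVertices fun i => nerveDiff F (Fin.zero_le i)
  left_inv c := DiffSimplex.ext <| funext₂ fun i j => c.diff_sub_diff 0 i j
  right_inv F := by
    refine Functor.hext (fun i => Subsingleton.elim (α := Unit) _ _) fun i j f => heq_of_eq ?_
    exact congrArg (Multiplicative.ofAdd (α := A))
      (sub_eq_of_eq_add' (nerveDiff_add_nerveDiff F (Fin.zero_le i) (leOfHom f)).symm)

end DiffSimplex

open DiffSimplex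

/-- The simplicial module freely generated by the nerve of a monoid. -/
abbrev nerveSimplicialModule : MonCat.{0} ⥤ SimplicialObject (ModuleCat.{0} ℤ) :=
  MonCat.toCat ⋙ nerveFunctor ⋙ (SimplicialObject.whiskering _ _).obj (ModuleCat.free ℤ)

/-- The complex whose homology is the integral homology of a monoid. -/
abbrev nerveComplex : MonCat.{0} ⥤ ChainComplex (ModuleCat.{0} ℤ) ℕ :=
  nerveSimplicialModule ⋙ alternatingFaceMapComplex (ModuleCat.{0} ℤ)

/-- The map from chains on the classifying space of `A` to chains on its nerve. -/
def toNerveChains (A : Type) [AddCommGroup A] (n : ℕ) :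
    ModuleCat.of ℤ (DiffSimplex A n →₀ ℤ) ⟶
      (nerveComplex.obj (MonCat.of (Multiplicative A))).X n :=
  ModuleCat.ofHom (Finsupp.lmapDomain ℤ ℤ (nerveEquiv (A := A) (n := n)))

lemma toNerveChains_bijective : Function.Bijective (toNerveChains A n).hom :=
  ⟨Finsupp.mapDomain_injective nerveEquiv.injective,
    Finsupp.mapDomain_surjective nerveEquiv.surjective⟩

lemma toNerveChains_δ (i : Fin (n + 2)) (x : DiffSimplex A (n + 1) →₀ ℤ) :
    ((nerveSimplicialModule.obj (MonCat.of (Multiplicative A))).δ i).hom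
        ((toNerveChains A (n + 1)).hom x) =
      (toNerveChains A n).hom (Finsupp.mapDomain (reindex i.succAbove) x) :=
  (Finsupp.mapDomain_comp (f := nerveEquiv (A := A) (n := n + 1))
    (g := fun F => (nerve (SingleObj (Multiplicative A))).δ i F)).symm.trans
    (Finsupp.mapDomain_comp (f := reindex i.succAbove) (g := nerveEquiv (A := A) (n := n)))

lemma toNerveChains_d (x : DiffSimplex A (n + 1) →₀ ℤ) :
    ((nerveComplex.obj (MonCat.of (Multiplicative A))).d (n + 1) n).hom
        ((toNerveChains A (n + 1)).hom x) =
      (toNerveChains A n).hom (barBoundary A n x) := by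
  have hd := AlternatingFaceMapComplex.obj_d_eq
    (nerveSimplicialModule.obj (MonCat.of (Multiplicative A))) n
  refine (congrArg (fun φ => φ.hom ((toNerveChains A (n + 1)).hom x)) hd).trans ?_
  rw [ModuleCat.hom_sum, LinearMap.sum_apply, barBoundary, altFaceSum_apply, map_sum]
  refine Finset.sum_congr rfl fun i _ => ?_
  rw [map_zsmul, ← toNerveChains_δ]
  rfl

lemma toNerveChains_map (f : A →+ B) (x : DiffSimplex A n →₀ ℤ) :
    ((nerveComplex.map (MonCat.ofHom f.toMultiplicative)).f n).hom ((toNerveChains A n).hom x) =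
      (toNerveChains B n).hom (Finsupp.mapDomain (DiffSimplex.map f) x) :=
  (Finsupp.mapDomain_comp (f := nerveEquiv (A := A) (n := n))
    (g := fun F => (nerveFunctor.map (MonCat.toCat.map
      (MonCat.ofHom f.toMultiplicative))).app (Opposite.op (SimplexCategory.mk n)) F)).symm.trans
    (Finsupp.mapDomain_comp (f := DiffSimplex.map f) (g := nerveEquiv (A := B) (n := n)))

end Nerve

section Comparison

attribute [local instance 10000] Rep.hV2

/-- The action of a group element as an endomorphism of the forgetful functor. -/
def forgetAction (g : G) :
    forget₂ (Rep.{0} ℤ G) (ModuleCat.{0} ℤ) ⟶ forget₂ (Rep.{0} ℤ G) (ModuleCat.{0} ℤ) where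
  app V := ModuleCat.ofHom (V.ρ g)
  naturality _ _ f := by
    ext x
    exact (Rep.hom_comm_apply f g x).symm

/-- The isomorphism of complexes identifying two models for the chains on the classifying space
of the abelian group underlying a `ℤG`-module. -/
def barToNerve (A : Rep.{0} ℤ G) :
    ((forget₂ (Rep.{0} ℤ G) (ModuleCat.{0} ℤ)).mapHomologicalComplex _).obj (barComplex.obj A) ⟶
      nerveComplex.obj (MonCat.of (Multiplicative (A : Type))) where
  f n := toNerveChains A n
  comm' i j hij := by
    obtain rfl : j + 1 = i := hij
    ext1
    refine LinearMap.ext fun x => (toNerveChains_d x).trans ?_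
    exact congrArg _ (barComplex_d_apply A j x).symm

instance (A : Rep.{0} ℤ G) : IsIso (barToNerve A) := by
  have (n : ℕ) : IsIso ((barToNerve A).f n) :=
    (ConcreteCategory.isIso_iff_bijective (toNerveChains A n)).2 toNerveChains_bijective
  exact HomologicalComplex.Hom.isIso_of_components _

lemma forgetAction_comp_barToNerve (A : Rep.{0} ℤ G) (g : G) :
    (NatTrans.mapHomologicalComplex (forgetAction g) _).app (barComplex.obj A) ≫ barToNerve A =
      barToNerve A ≫ nerveComplex.map (MonCat.ofHom (multHom A g)) := by
  ext n : 2
  exact LinearMap.ext fun x => (toNerveChains_map (A.ρ g).toAddMonoidHom x).symm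

/-- The isomorphism from the homology of the bar complex to that of the nerve. -/
def barHomologyToNerve (A : Rep.{0} ℤ G) (n : ℕ) :
    (forget₂ (Rep.{0} ℤ G) (ModuleCat.{0} ℤ)).obj ((barHomology n).obj A) ⟶
      (groupHomologyFunctor n).obj (MonCat.of (Multiplicative (A : Type))) :=
  (((barComplex.obj A).sc n).mapHomologyIso (forget₂ (Rep.{0} ℤ G) (ModuleCat.{0} ℤ))).inv ≫
    HomologicalComplex.homologyMap (barToNerve A) n

instance (A : Rep.{0} ℤ G) (n : ℕ) : IsIso (barHomologyToNerve A n) :=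
  IsIso.comp_isIso' (f := (((barComplex.obj A).sc n).mapHomologyIso _).inv)
    inferInstance (inferInstanceAs (IsIso (HomologicalComplex.homologyMap (barToNerve A) n)))

lemma forgetAction_comp_barHomologyToNerve (A : Rep.{0} ℤ G) (n : ℕ) (g : G) :
    (forgetAction g).app ((barHomology n).obj A) ≫ barHomologyToNerve A n =
      barHomologyToNerve A n ≫ (groupHomologyFunctor n).map (MonCat.ofHom (multHom A g)) := by
  have hforget := NatTrans.app_homology (forgetAction g) ((barComplex.obj A).sc n)
  rw [← Category.assoc, ← Iso.comp_inv_eq] at hforget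
  have hchain := congrArg (HomologicalComplex.homologyMap · n) (forgetAction_comp_barToNerve A g)
  simp only [HomologicalComplex.homologyMap_comp] at hchain
  exact (CommSq.horiz_comp ⟨hforget.symm⟩ ⟨hchain.symm⟩).w.symm

lemma memC_homologyDiagRep {π : Set ℕ} {A : Rep.{0} ℤ G} (n : ℕ)
    (h : MemC G π ((barHomology n).obj A)) : MemC G π (Rep.of (homologyDiagRep A n)) :=
  .quot _ _ (repHom (B := Rep.of (homologyDiagRep A n))
      (barHomologyToNerve A n).hom.toAddMonoidHom fun g x =>
        congrArg (fun φ => φ.hom x) (forgetAction_comp_barHomologyToNerve A n g))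
    ((ConcreteCategory.isIso_iff_bijective (barHomologyToNerve A n)).1 inferInstance).2 h

end Comparison

/-- Let `G` be a group and `π` a set of primes.  If `A` is a `ℤG`-module
belonging to `𝔠(G, π)`, then for every `n ≥ 0` the integral homology `H_n(A)` of
the underlying abelian group of `A`, with the `ℤG`-module structure induced by
functoriality, belongs to `𝔠(G, π)`. -/
theorem memC_integral_homology (G : Type) [Group G] (π : Set ℕ) (A : Rep ℤ G)
    (hA : MemC G π A) (n : ℕ) :
    MemC G π (Rep.of (homologyDiagRep A n)) := by
  have hsmall : IsHomologicallySmall π A :=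
    .of_memC (fun _ => isHomologicallySmall_of_niceRep) hA
  exact memC_homologyDiagRep n (hsmall.classC_barHomology n)

end
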